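/- arXiv:2201.05328 — 2 statements merged into one kernel-verified Lean document; each statement's English description precedes it below -/
import Mathlib

section
/- Let k ∈ (0, 1), let m, n be relatively prime positive integers, and suppose ω = πm/(nkK(k)), so that 2πm/ω = 2nkK(k). Then for all real β, δ, θ, the subharmonic Melnikov integrals along the rotational orbits x̃^k_± evaluate as ∫₀^{2πm/ω} x̃^k_{±,2}(t)(β cos(ωt + θ) − δ x̃^k_{±,2}(t)) dt = −8nδ E(k)/k ± J̃₂ β cos θ, where J̃₂ = 2π sech(kωK(k')) if n = 1, and J̃₂ = 0 if n ≠ 1. -/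
open Real

/-- The complete elliptic integral of the first kind. -/
noncomputable def Kell (k : ℝ) : ℝ :=
  ∫ φ in (0 : ℝ)..(π / 2), 1 / Real.sqrt (1 - k ^ 2 * Real.sin φ ^ 2)

/-- The complete elliptic integral of the second kind. -/
noncomputable def Eell (k : ℝ) : ℝ :=
  ∫ φ in (0 : ℝ)..(π / 2), Real.sqrt (1 - k ^ 2 * Real.sin φ ^ 2)

/-!
In terms of `φ = x₁ / 2` the rotational orbit through `(0, 2 / k)` has velocity `(2 / k) Δ(φ)` and
time `t = k F(φ, k)`, so the dissipative part of the Melnikov integral is a complete elliptic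
integral of the second kind, and its forcing part is the real part of a multiple of the integral of
`exp (i k ω F(φ, k))` over `0 ≤ φ ≤ nπ`. Translating `φ` by `π` multiplies the last integrand by an
`n`-th root of unity, and the integral vanishes unless that root is `1`.

If it is `1`, the integrand is a function of `F(φ, k) / K(k')` that is periodic along `φ ↦ φ + π`.
The ascending Landen transformation preserves the mean of such a function over a period, and
iterating it pushes the modulus to `1`, where `F(φ, 1) = artanh (sin φ)` and `K(0) = π / 2`. The
mean is then a Beta integral, and the reflection formula for `Γ` produces the hyperbolic secant.
-/

open MeasureTheory Set Filter Topology

section Periodic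

variable {E : Type*} [NormedAddCommGroup E] [NormedSpace ℝ E] {T : ℝ}

lemma intervalIntegral_eq_zero_of_add_eq_smul {𝕜 : Type*} [RCLike 𝕜] [NormedSpace 𝕜 E]
    [SMulCommClass ℝ 𝕜 E] {f : ℝ → E} {c : 𝕜} {n : ℕ} (hf : ∀ s, f (s + T) = c • f s)
    (hcn : c ^ n = 1) (hc : c ≠ 1) (t : ℝ) : ∫ s in t..t + n * T, f s = 0 := by
  have hper : Function.Periodic f (n * T) := fun s ↦ by
    have h := Function.Semiconj.iterate_right (f := f) (ga := (· + T)) (gb := (c • ·)) hf n s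
    simpa only [add_right_iterate, smul_iterate, nsmul_eq_mul, hcn, one_smul] using h
  have hshift := intervalIntegral.integral_comp_add_right (a := t) (b := t + n * T) f T
  rw [add_right_comm, hper.intervalIntegral_add_eq (t + T) t] at hshift
  simp only [hf, intervalIntegral.integral_smul] at hshift
  have hzero : (c - 1) • ∫ s in t..t + n * T, f s = 0 := by
    rw [sub_smul, one_smul, hshift, sub_self]
  exact (smul_eq_zero.1 hzero).resolve_left (sub_ne_zero.2 hc)

lemma intervalIntegral_add_nat_mul_of_periodic {f : ℝ → E} (hf : Continuous f)
    (hT : Function.Periodic f T) (n : ℕ) (s t : ℝ) :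
    ∫ r in s..s + n * T, f r = n • ∫ r in t..t + T, f r := by
  have h := hT.intervalIntegral_add_zsmul_eq n s fun _ _ ↦ hf.intervalIntegrable _ _
  rw [hT.intervalIntegral_add_eq t s]
  simpa using h

lemma intervalIntegral_zero_nat_mul_of_even_periodic {f : ℝ → ℝ} (hf : Continuous f)
    (heven : Function.Even f) (hT : Function.Periodic f T) (n : ℕ) :
    ∫ s in (0 : ℝ)..n * T, f s = 2 * n * ∫ s in (0 : ℝ)..T / 2, f s := by
  have hleft : ∫ s in -(T / 2)..0, f s = ∫ s in (0 : ℝ)..T / 2, f s := by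
    simpa [heven _] using (intervalIntegral.integral_comp_neg (a := 0) (b := T / 2) f).symm
  rw [← zero_add (n * T), intervalIntegral_add_nat_mul_of_periodic hf hT n 0 (-(T / 2)),
    neg_add_eq_sub, sub_half,
    ← intervalIntegral.integral_add_adjacent_intervals (hf.intervalIntegrable _ 0)
      (hf.intervalIntegrable _ _), hleft, nsmul_eq_mul]
  ring

end Periodic

/-- Legendre's `Δ(φ) = √(1 - k² sin² φ)`. -/
noncomputable def legendreDelta (k φ : ℝ) : ℝ :=
  √(1 - k ^ 2 * sin φ ^ 2)

/-- The incomplete elliptic integral of the first kind, with amplitude `φ` and modulus `k`. -/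
noncomputable def ellipticF (k φ : ℝ) : ℝ :=
  ∫ s in (0 : ℝ)..φ, 1 / legendreDelta k s

section EllipticIntegrals

variable {k : ℝ}

lemma one_sub_mul_sin_sq_pos (hk : k ^ 2 < 1) (φ : ℝ) : 0 < 1 - k ^ 2 * sin φ ^ 2 := by
  nlinarith [sin_sq_le_one φ, sq_nonneg k, sq_nonneg (sin φ)]

lemma legendreDelta_pos (hk : k ^ 2 < 1) (φ : ℝ) : 0 < legendreDelta k φ :=
  sqrt_pos.2 (one_sub_mul_sin_sq_pos hk φ)

lemma legendreDelta_sq (hk : k ^ 2 < 1) (φ : ℝ) :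
    legendreDelta k φ ^ 2 = 1 - k ^ 2 * sin φ ^ 2 :=
  sq_sqrt (one_sub_mul_sin_sq_pos hk φ).le

@[fun_prop]
lemma continuous_legendreDelta (k : ℝ) : Continuous (legendreDelta k) := by
  unfold legendreDelta
  fun_prop

lemma continuous_one_div_legendreDelta (hk : k ^ 2 < 1) :
    Continuous fun φ ↦ 1 / legendreDelta k φ :=
  continuous_const.div (continuous_legendreDelta k) fun φ ↦ (legendreDelta_pos hk φ).ne'

lemma even_legendreDelta (k : ℝ) : Function.Even (legendreDelta k) := fun φ ↦ by
  simp [legendreDelta]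

lemma periodic_legendreDelta (k : ℝ) : Function.Periodic (legendreDelta k) π := fun φ ↦ by
  simp [legendreDelta]

lemma integral_legendreDelta_zero_nat_mul_pi (k : ℝ) (n : ℕ) :
    ∫ s in (0 : ℝ)..n * π, legendreDelta k s = 2 * n * Eell k :=
  intervalIntegral_zero_nat_mul_of_even_periodic (continuous_legendreDelta k)
    (even_legendreDelta k) (periodic_legendreDelta k) n

@[simp]
lemma ellipticF_zero_right (k : ℝ) : ellipticF k 0 = 0 :=
  intervalIntegral.integral_same

lemma ellipticF_pi_div_two (k : ℝ) : ellipticF k (π / 2) = Kell k := rfl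

lemma ellipticF_nat_mul_pi (hk : k ^ 2 < 1) (n : ℕ) : ellipticF k (n * π) = 2 * n * Kell k :=
  intervalIntegral_zero_nat_mul_of_even_periodic (continuous_one_div_legendreDelta hk)
    (fun φ ↦ congrArg (1 / ·) (even_legendreDelta k φ))
    (fun φ ↦ congrArg (1 / ·) (periodic_legendreDelta k φ)) n

lemma ellipticF_pi (hk : k ^ 2 < 1) : ellipticF k π = 2 * Kell k := by
  simpa using ellipticF_nat_mul_pi hk 1

lemma ellipticF_add_pi (hk : k ^ 2 < 1) (φ : ℝ) :
    ellipticF k (φ + π) = ellipticF k φ + 2 * Kell k := by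
  have hper : Function.Periodic (fun φ ↦ 1 / legendreDelta k φ) π :=
    fun φ ↦ congrArg (1 / ·) (periodic_legendreDelta k φ)
  have h := hper.intervalIntegral_add_eq_add 0 φ
    fun _ _ ↦ (continuous_one_div_legendreDelta hk).intervalIntegrable _ _
  rwa [zero_add, ← ellipticF, ← ellipticF, ← ellipticF, ellipticF_pi hk] at h

lemma hasDerivAt_ellipticF (hk : k ^ 2 < 1) (φ : ℝ) :
    HasDerivAt (ellipticF k) (1 / legendreDelta k φ) φ :=
  ((continuous_one_div_legendreDelta hk).integral_hasStrictDerivAt 0 φ).hasDerivAt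

lemma continuous_ellipticF (hk : k ^ 2 < 1) : Continuous (ellipticF k) :=
  continuous_iff_continuousAt.2 fun φ ↦ (hasDerivAt_ellipticF hk φ).continuousAt

lemma strictMono_ellipticF (hk : k ^ 2 < 1) : StrictMono (ellipticF k) := by
  refine strictMono_of_deriv_pos fun φ ↦ ?_
  rw [(hasDerivAt_ellipticF hk φ).deriv]
  exact one_div_pos.2 (legendreDelta_pos hk φ)

lemma Kell_pos (hk : k ^ 2 < 1) : 0 < Kell k := by
  rw [← ellipticF_pi_div_two, ← ellipticF_zero_right k]
  exact strictMono_ellipticF hk pi_div_two_pos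

lemma Kell_sqrt_one_sub_sq_pos (hk : k ∈ Ioo 0 1) : 0 < Kell √(1 - k ^ 2) := by
  refine Kell_pos ?_
  rw [sq_sqrt] <;> nlinarith [hk.1, hk.2]

lemma Kell_zero : Kell 0 = π / 2 := by simp [Kell]

lemma sin_sq_le_sin_sq_of_abs_le {s φ : ℝ} (hsφ : |s| ≤ |φ|) (hφ : |φ| ≤ π / 2) :
    sin s ^ 2 ≤ sin φ ^ 2 := by
  have hφπ : |φ| ≤ π := by linarith [pi_pos]
  rw [sq_le_sq, abs_sin_eq_sin_abs_of_abs_le_pi hφπ,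
    abs_sin_eq_sin_abs_of_abs_le_pi (hsφ.trans hφπ)]
  exact sin_le_sin_of_le_of_le_pi_div_two (by linarith [abs_nonneg s, pi_pos]) hφ hsφ

lemma continuousAt_ellipticF_modulus {φ : ℝ} (hφ : |φ| ≤ π / 2) (hk : k ^ 2 * sin φ ^ 2 < 1) :
    ContinuousAt (fun κ ↦ ellipticF κ φ) k := by
  obtain ⟨c, hkc, hc⟩ := exists_between hk
  have hle (κ : ℝ) {s : ℝ} (hs : s ∈ uIoc 0 φ) : κ ^ 2 * sin s ^ 2 ≤ κ ^ 2 * sin φ ^ 2 := by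
    have hs' : |s| ≤ |φ| := by simpa using abs_sub_left_of_mem_uIcc (uIoc_subset_uIcc hs)
    gcongr κ ^ 2 * ?_
    exact sin_sq_le_sin_sq_of_abs_le hs' hφ
  refine intervalIntegral.continuousAt_of_dominated_interval (bound := fun _ ↦ 1 / √(1 - c))
    (Eventually.of_forall fun κ ↦ ?_) ?_ intervalIntegrable_const
    (Eventually.of_forall fun s hs ↦ ?_)
  · exact (measurable_const.div (continuous_legendreDelta κ).measurable).aestronglyMeasurable
  · have hev : ∀ᶠ κ in 𝓝 k, κ ^ 2 * sin φ ^ 2 < c :=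
      (show Continuous fun κ : ℝ ↦ κ ^ 2 * sin φ ^ 2 by fun_prop).continuousAt.eventually_lt_const
        hkc
    filter_upwards [hev] with κ hκ
    refine Eventually.of_forall fun s hs ↦ ?_
    rw [legendreDelta, norm_of_nonneg (by positivity)]
    exact one_div_le_one_div_of_le (sqrt_pos.2 (by linarith))
      (sqrt_le_sqrt (by linarith [hle κ hs]))
  · have : 0 < 1 - k ^ 2 * sin s ^ 2 := by linarith [hle k hs]
    unfold legendreDelta
    exact ContinuousAt.div (by fun_prop) (by fun_prop) (sqrt_pos.2 this).ne'

lemma hasDerivAt_artanh {x : ℝ} (hx : x ∈ Ioo (-1) 1) :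
    HasDerivAt artanh (1 / (1 - x ^ 2)) x := by
  have hplus : 1 + x ≠ 0 := by linarith [hx.1]
  have hminus : 1 - x ≠ 0 := by linarith [hx.2]
  have hlog := ((((hasDerivAt_id x).const_add 1).div ((hasDerivAt_id x).const_sub 1)
    hminus).log (div_ne_zero hplus hminus)).const_mul (1 / 2)
  refine (hlog.congr_of_eventuallyEq ?_).congr_deriv ?_
  · filter_upwards [isOpen_Ioo.mem_nhds hx] with y hy
    exact artanh_eq_half_log (Ioo_subset_Icc_self hy)
  · have : 1 - x ^ 2 ≠ 0 := by
      rw [show 1 - x ^ 2 = (1 + x) * (1 - x) by ring]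
      exact mul_ne_zero hplus hminus
    simp only [Pi.div_apply, id]
    field_simp
    ring

lemma sin_mem_Ioo_of_cos_pos {φ : ℝ} (hφ : 0 < cos φ) : sin φ ∈ Ioo (-1) 1 := by
  constructor <;> nlinarith [sin_sq_add_cos_sq φ]

lemma ellipticF_one {φ : ℝ} (hφ : φ ∈ Ioo (-(π / 2)) (π / 2)) :
    ellipticF 1 φ = artanh (sin φ) := by
  have hcos {s : ℝ} (hs : s ∈ uIcc 0 φ) : 0 < cos s :=
    cos_pos_of_mem_Ioo (ordConnected_Ioo.uIcc_subset ⟨by linarith [pi_pos], pi_div_two_pos⟩ hφ hs)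
  have hderiv (s : ℝ) (hs : s ∈ uIcc 0 φ) :
      HasDerivAt (fun s ↦ artanh (sin s)) (1 / cos s) s := by
    refine ((hasDerivAt_artanh (sin_mem_Ioo_of_cos_pos (hcos hs))).comp s
      (hasDerivAt_sin s)).congr_deriv ?_
    rw [← cos_sq', pow_two, one_div_mul_eq_div, div_mul_cancel_left₀ (hcos hs).ne', one_div]
  have hdelta : EqOn (fun s ↦ 1 / legendreDelta 1 s) (fun s ↦ 1 / cos s) (uIcc 0 φ) :=
    fun s hs ↦ by simp only [legendreDelta, one_pow, one_mul, ← cos_sq', sqrt_sq (hcos hs).le]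
  have hcont : ContinuousOn (fun s ↦ 1 / cos s) (uIcc 0 φ) :=
    continuousOn_const.div continuousOn_cos fun s hs ↦ (hcos hs).ne'
  rw [ellipticF, intervalIntegral.integral_congr hdelta,
    intervalIntegral.integral_eq_sub_of_hasDerivAt hderiv hcont.intervalIntegrable]
  simp

end EllipticIntegrals

/-- The modulus produced from `k` by the ascending Landen transformation. -/
noncomputable def landenModulus (k : ℝ) : ℝ :=
  2 * √k / (1 + k)

/-- The amplitude `ψ` produced from `φ` by the ascending Landen transformation, that is,
the solution of `sin (2ψ - φ) = k sin φ`. -/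
noncomputable def landenAngle (k φ : ℝ) : ℝ :=
  (φ + arcsin (k * sin φ)) / 2

section Landen

variable {k : ℝ}

lemma landenModulus_nonneg (hk : 0 ≤ k) : 0 ≤ landenModulus k := by
  unfold landenModulus
  positivity

lemma landenModulus_sq (hk : 0 ≤ k) : landenModulus k ^ 2 = 4 * k / (1 + k) ^ 2 := by
  rw [landenModulus, div_pow, mul_pow, sq_sqrt hk]
  ring

lemma one_sub_landenModulus_sq (hk : 0 ≤ k) :
    1 - landenModulus k ^ 2 = ((1 - k) / (1 + k)) ^ 2 := by
  rw [landenModulus_sq hk]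
  field_simp
  ring

lemma landenModulus_sq_lt_one (hk0 : 0 ≤ k) (hk1 : k < 1) : landenModulus k ^ 2 < 1 := by
  have : 0 < ((1 - k) / (1 + k)) ^ 2 := pow_pos (div_pos (by linarith) (by linarith)) 2
  linarith [one_sub_landenModulus_sq hk0]

lemma landenModulus_mem_Ioo (hk : k ∈ Ioo 0 1) : landenModulus k ∈ Ioo 0 1 :=
  ⟨div_pos (mul_pos two_pos (sqrt_pos.2 hk.1)) (by linarith [hk.1]),
    (sq_lt_one_iff₀ (landenModulus_nonneg hk.1.le)).1 (landenModulus_sq_lt_one hk.1.le hk.2)⟩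

lemma one_sub_landenModulus_le (hk : 0 ≤ k) : 1 - landenModulus k ≤ (1 - k) ^ 2 := by
  obtain ⟨r, hr, rfl⟩ : ∃ r, 0 ≤ r ∧ k = r ^ 2 := ⟨√k, sqrt_nonneg k, (sq_sqrt hk).symm⟩
  have hone : 1 ≤ (1 + r) ^ 2 * (1 + r ^ 2) := by nlinarith [sq_nonneg r, mul_nonneg hr hr]
  rw [landenModulus, sqrt_sq hr, sub_le_iff_le_add, ← sub_le_iff_le_add',
    le_div_iff₀ (by positivity)]
  nlinarith [mul_nonneg (sq_nonneg (1 - r)) (sub_nonneg.2 hone)]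

lemma landenModulus_iterate_mem_Ioo (hk : k ∈ Ioo 0 1) (j : ℕ) :
    landenModulus^[j] k ∈ Ioo 0 1 :=
  (show MapsTo landenModulus (Ioo 0 1) (Ioo 0 1) from
    fun _ h ↦ landenModulus_mem_Ioo h).iterate j hk

lemma one_sub_landenModulus_iterate_le (hk : k ∈ Ioo 0 1) (j : ℕ) :
    1 - landenModulus^[j] k ≤ (1 - k) ^ 2 ^ j := by
  induction j with
  | zero => simp
  | succ j ih =>
    have hj := landenModulus_iterate_mem_Ioo hk j
    rw [Function.iterate_succ_apply', pow_succ, pow_mul]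
    exact (one_sub_landenModulus_le hj.1.le).trans (pow_le_pow_left₀ (by linarith [hj.2]) ih 2)

lemma tendsto_landenModulus_iterate (hk : k ∈ Ioo 0 1) :
    Tendsto (fun j ↦ landenModulus^[j] k) atTop (𝓝 1) := by
  have hpow : Tendsto (fun j : ℕ ↦ 1 - (1 - k) ^ 2 ^ j) atTop (𝓝 1) := by
    simpa using ((tendsto_pow_atTop_nhds_zero_of_lt_one (by linarith [hk.2])
      (by linarith [hk.1])).comp (tendsto_pow_atTop_atTop_of_one_lt one_lt_two)).const_sub (1 : ℝ)
  refine tendsto_of_tendsto_of_tendsto_of_le_of_le hpow tendsto_const_nhds (fun j ↦ ?_)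
    fun j ↦ (landenModulus_iterate_mem_Ioo hk j).2.le
  linarith [one_sub_landenModulus_iterate_le hk j]

lemma mul_sin_mem_Ioo (hk : k ^ 2 < 1) (φ : ℝ) : k * sin φ ∈ Ioo (-1) 1 := by
  rw [mem_Ioo, ← abs_lt, ← sq_lt_one_iff_abs_lt_one, mul_pow]
  linarith [one_sub_mul_sin_sq_pos hk φ]

lemma cos_arcsin_mul_sin (k φ : ℝ) : cos (arcsin (k * sin φ)) = legendreDelta k φ := by
  rw [cos_arcsin, mul_pow, legendreDelta]

lemma hasDerivAt_landenAngle (hk : k ^ 2 < 1) (φ : ℝ) :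
    HasDerivAt (landenAngle k) ((1 + k * cos φ / legendreDelta k φ) / 2) φ := by
  have hmem := mul_sin_mem_Ioo hk φ
  refine (((hasDerivAt_id φ).add ((hasDerivAt_arcsin hmem.1.ne' hmem.2.ne).comp φ
    ((hasDerivAt_sin φ).const_mul k))).div_const 2).congr_deriv ?_
  rw [mul_pow, ← legendreDelta, one_div_mul_eq_div]

lemma cos_two_mul_landenAngle (hk : k ^ 2 < 1) (φ : ℝ) :
    cos (2 * landenAngle k φ) = cos φ * legendreDelta k φ - k * sin φ ^ 2 := by
  have hmem := mul_sin_mem_Ioo hk φ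
  rw [landenAngle, mul_div_cancel₀ _ two_ne_zero, cos_add, cos_arcsin_mul_sin,
    sin_arcsin hmem.1.le hmem.2.le]
  ring

lemma legendreDelta_landenAngle (hk0 : 0 ≤ k) (hk1 : k < 1) (φ : ℝ) :
    (1 + k) * legendreDelta (landenModulus k) (landenAngle k φ)
      = legendreDelta k φ + k * cos φ := by
  have hk : k ^ 2 < 1 := pow_lt_one₀ hk0 hk1 two_ne_zero
  have hsq := legendreDelta_sq hk φ
  have hpos : 0 ≤ legendreDelta k φ + k * cos φ := by
    have : |k * cos φ| ≤ legendreDelta k φ :=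
      abs_le_of_sq_le_sq (by nlinarith [sin_sq_add_cos_sq φ]) (legendreDelta_pos hk φ).le
    linarith [neg_abs_le (k * cos φ)]
  have hΔ := legendreDelta_pos (landenModulus_sq_lt_one hk0 hk1) (landenAngle k φ)
  refine (pow_left_inj₀ (by positivity) hpos two_ne_zero).1 ?_
  have hmod : (1 + k) ^ 2 * landenModulus k ^ 2 = 4 * k := by
    rw [landenModulus_sq hk0]
    field_simp
  rw [mul_pow, legendreDelta_sq (landenModulus_sq_lt_one hk0 hk1), sin_sq_eq_half_sub,
    cos_two_mul_landenAngle hk]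
  linear_combination (-(1 - (cos φ * legendreDelta k φ - k * sin φ ^ 2)) / 2) * hmod - hsq
    - k ^ 2 * sin_sq_add_cos_sq φ

lemma ellipticF_landen (hk0 : 0 ≤ k) (hk1 : k < 1) (φ : ℝ) :
    ellipticF (landenModulus k) (landenAngle k φ) = (1 + k) / 2 * ellipticF k φ := by
  have hk : k ^ 2 < 1 := pow_lt_one₀ hk0 hk1 two_ne_zero
  have hd (φ : ℝ) : HasDerivAt (fun φ ↦ ellipticF (landenModulus k) (landenAngle k φ)
      - (1 + k) / 2 * ellipticF k φ) 0 φ := by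
    refine (((hasDerivAt_ellipticF (landenModulus_sq_lt_one hk0 hk1) _).comp φ
      (hasDerivAt_landenAngle hk φ)).sub
      ((hasDerivAt_ellipticF hk φ).const_mul _)).congr_deriv ?_
    have hΔ := (legendreDelta_pos hk φ).ne'
    have hΔ' := (legendreDelta_pos (landenModulus_sq_lt_one hk0 hk1) (landenAngle k φ)).ne'
    field_simp
    linear_combination -legendreDelta_landenAngle hk0 hk1 φ
  have hconst := is_const_of_deriv_eq_zero (fun φ ↦ (hd φ).differentiableAt)
    (fun φ ↦ (hd φ).deriv) φ 0
  simpa [landenAngle, sub_eq_zero] using hconst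

lemma landenAngle_pi (k : ℝ) : landenAngle k π = π / 2 := by simp [landenAngle]

lemma landenAngle_neg_pi (k : ℝ) : landenAngle k (-π) = -(π / 2) := by
  simp [landenAngle, neg_div]

lemma Kell_landenModulus (hk0 : 0 ≤ k) (hk1 : k < 1) :
    Kell (landenModulus k) = (1 + k) * Kell k := by
  rw [← ellipticF_pi_div_two, ← landenAngle_pi k, ellipticF_landen hk0 hk1,
    ellipticF_pi (pow_lt_one₀ hk0 hk1 two_ne_zero)]
  ring

lemma Kell_sqrt_one_sub_landenModulus_sq (hk0 : 0 < k) (hk1 : k < 1) :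
    Kell √(1 - landenModulus k ^ 2) = (1 + k) / 2 * Kell √(1 - k ^ 2) := by
  have hl0 : 0 ≤ (1 - k) / (1 + k) := div_nonneg (by linarith) (by linarith)
  have hl1 : (1 - k) / (1 + k) < 1 := by
    rw [div_lt_one (by linarith)]
    linarith
  have hinv : landenModulus ((1 - k) / (1 + k)) = √(1 - k ^ 2) := by
    refine (sqrt_sq (landenModulus_nonneg hl0)).symm.trans (congrArg sqrt ?_)
    rw [landenModulus_sq hl0]
    field_simp
    ring
  rw [one_sub_landenModulus_sq hk0.le, sqrt_sq hl0, ← hinv, Kell_landenModulus hl0 hl1]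
  field_simp
  ring

end Landen

/-- The elliptic integral `F(φ, k)` measured in units of the complementary complete integral
`K(k')`: the normalization which the ascending Landen transformation leaves invariant. -/
noncomputable def scaledEllipticF (k φ : ℝ) : ℝ :=
  ellipticF k φ / Kell √(1 - k ^ 2)

section ScaledEllipticF

variable {k : ℝ}

lemma continuous_scaledEllipticF (hk : k ^ 2 < 1) : Continuous (scaledEllipticF k) :=
  (continuous_ellipticF hk).div_const _

lemma scaledEllipticF_add_pi (hk : k ^ 2 < 1) (φ : ℝ) :
    scaledEllipticF k (φ + π) = scaledEllipticF k φ + scaledEllipticF k π := by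
  simp only [scaledEllipticF, ellipticF_add_pi hk, ellipticF_pi hk, add_div]

lemma scaledEllipticF_landen (hk : k ∈ Ioo 0 1) (φ : ℝ) :
    scaledEllipticF (landenModulus k) (landenAngle k φ) = scaledEllipticF k φ := by
  rw [scaledEllipticF, ellipticF_landen hk.1.le hk.2,
    Kell_sqrt_one_sub_landenModulus_sq hk.1 hk.2, mul_div_mul_left _ _ (by linarith [hk.1]),
    scaledEllipticF]

lemma scaledEllipticF_landenModulus_pi (hk : k ∈ Ioo 0 1) :
    scaledEllipticF (landenModulus k) π = 2 * scaledEllipticF k π := by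
  rw [← scaledEllipticF_landen hk π, landenAngle_pi, scaledEllipticF, scaledEllipticF,
    ellipticF_pi (landenModulus_sq_lt_one hk.1.le hk.2), ellipticF_pi_div_two, mul_div_assoc]

lemma continuousAt_scaledEllipticF_one {φ : ℝ} (hφ : φ ∈ Ioo (-(π / 2)) (π / 2)) :
    ContinuousAt (fun κ ↦ scaledEllipticF κ φ) 1 := by
  have hsin := sin_mem_Ioo_of_cos_pos (cos_pos_of_mem_Ioo hφ)
  refine (continuousAt_ellipticF_modulus (abs_le.2 ⟨hφ.1.le, hφ.2.le⟩) ?_).div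
    (ContinuousAt.comp (g := Kell) (f := fun κ ↦ √(1 - κ ^ 2)) ?_ (by fun_prop)) ?_
  · rw [one_pow, one_mul, sq_lt_one_iff_abs_lt_one, abs_lt]
    exact hsin
  · refine continuousAt_ellipticF_modulus (abs_of_pos pi_div_two_pos).le ?_
    simp
  · exact (Kell_pos (by simp)).ne'

variable {E : Type*} [NormedAddCommGroup E] [NormedSpace ℝ E] {g : ℝ → E}

lemma integral_mul_cos_div_legendreDelta_smul_eq_zero (k : ℝ) {f : ℝ → E}
    (hf : Function.Periodic f π) :
    ∫ φ in -π..π, (k * cos φ / legendreDelta k φ) • f φ = 0 := by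
  have hanti (φ : ℝ) : (k * cos (φ + π) / legendreDelta k (φ + π)) • f (φ + π)
      = (-1 : ℝ) • (k * cos φ / legendreDelta k φ) • f φ := by
    rw [cos_add_pi, periodic_legendreDelta, hf, mul_neg, neg_div, neg_smul, neg_one_smul]
  have hend : -π + (2 : ℕ) * π = π := by
    push_cast
    ring
  have hzero := intervalIntegral_eq_zero_of_add_eq_smul (n := 2)
    (f := fun φ ↦ (k * cos φ / legendreDelta k φ) • f φ) hanti (by norm_num) (by norm_num) (-π)
  rwa [hend] at hzero

-- In terms of `φ`, `dψ = (1 + k cos φ / Δ(φ)) dφ / 2`. The second summand changes sign under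
-- `φ ↦ φ + π`, so only the first contributes.
lemma integral_comp_scaledEllipticF_landenModulus (hk : k ∈ Ioo 0 1) (hg : Continuous g)
    (hper : Function.Periodic g (scaledEllipticF k π)) :
    ∫ ψ in -(π / 2)..π / 2, g (scaledEllipticF (landenModulus k) ψ)
      = ∫ φ in -(π / 2)..π / 2, g (scaledEllipticF k φ) := by
  have hk2 : k ^ 2 < 1 := pow_lt_one₀ hk.1.le hk.2 two_ne_zero
  have hF := continuous_scaledEllipticF hk2
  have hF' := continuous_scaledEllipticF (landenModulus_sq_lt_one hk.1.le hk.2)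
  have hgF : Function.Periodic (fun φ ↦ g (scaledEllipticF k φ)) π := fun φ ↦ by
    simp only [scaledEllipticF_add_pi hk2, hper _]
  have hcos : Continuous fun φ ↦ k * cos φ / legendreDelta k φ :=
    Continuous.div (by fun_prop) (by fun_prop) fun φ ↦ (legendreDelta_pos hk2 φ).ne'
  have hderiv : Continuous fun φ ↦ (1 + k * cos φ / legendreDelta k φ) / 2 :=
    (hcos.const_add 1).div_const 2
  have hzero := integral_mul_cos_div_legendreDelta_smul_eq_zero k hgF
  have htwo := intervalIntegral_add_nat_mul_of_periodic (by fun_prop) hgF 2 (-π) (-(π / 2))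
  have hend : -π + 2 * π = π := by ring
  have hend' : -(π / 2) + π = π / 2 := by ring
  rw [Nat.cast_two, hend, hend'] at htwo
  rw [← landenAngle_neg_pi k, ← landenAngle_pi k,
    ← intervalIntegral.integral_deriv_smul_comp (fun φ _ ↦ hasDerivAt_landenAngle hk2 φ)
      hderiv.continuousOn (by fun_prop)]
  calc ∫ φ in -π..π, ((1 + k * cos φ / legendreDelta k φ) / 2) •
        ((fun ψ ↦ g (scaledEllipticF (landenModulus k) ψ)) ∘ landenAngle k) φ
      = (1 / 2 : ℝ) • ∫ φ in -π..π, (g (scaledEllipticF k φ)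
          + (k * cos φ / legendreDelta k φ) • g (scaledEllipticF k φ)) := by
        rw [← intervalIntegral.integral_smul]
        congr with φ
        rw [Function.comp_apply, scaledEllipticF_landen hk]
        module
    _ = (1 / 2 : ℝ) • (2 : ℕ) • ∫ φ in -(π / 2)..π / 2, g (scaledEllipticF k φ) := by
        rw [intervalIntegral.integral_add (Continuous.intervalIntegrable (by fun_prop) _ _)
          (Continuous.intervalIntegrable (by fun_prop) _ _), hzero, add_zero, htwo]
    _ = ∫ φ in landenAngle k (-π)..landenAngle k π, g (scaledEllipticF k φ) := by
        rw [landenAngle_neg_pi, landenAngle_pi, two_nsmul, ← two_smul ℝ, smul_smul]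
        norm_num

lemma integral_comp_scaledEllipticF_landenModulus_iterate (hk : k ∈ Ioo 0 1) (hg : Continuous g)
    (hper : Function.Periodic g (scaledEllipticF k π)) (j : ℕ) :
    ∫ φ in -(π / 2)..π / 2, g (scaledEllipticF (landenModulus^[j] k) φ)
      = ∫ φ in -(π / 2)..π / 2, g (scaledEllipticF k φ) := by
  induction j generalizing k with
  | zero => rfl
  | succ j ih =>
    have hper' : Function.Periodic g (scaledEllipticF (landenModulus k) π) := by
      rw [scaledEllipticF_landenModulus_pi hk]
      exact_mod_cast hper.nat_mul 2
    rw [Function.iterate_succ_apply, ih (landenModulus_mem_Ioo hk) hper',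
      integral_comp_scaledEllipticF_landenModulus hk hg hper]

lemma scaledEllipticF_pi_ne_zero (hk : k ∈ Ioo 0 1) : scaledEllipticF k π ≠ 0 := by
  have hk2 : k ^ 2 < 1 := pow_lt_one₀ hk.1.le hk.2 two_ne_zero
  rw [scaledEllipticF, ellipticF_pi hk2]
  have := Kell_pos hk2
  have := Kell_sqrt_one_sub_sq_pos hk
  positivity

theorem integral_comp_scaledEllipticF (hk : k ∈ Ioo 0 1) (hg : Continuous g)
    (hper : Function.Periodic g (scaledEllipticF k π)) :
    ∫ φ in -(π / 2)..π / 2, g (scaledEllipticF k φ)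
      = ∫ φ in -(π / 2)..π / 2, g (scaledEllipticF 1 φ) := by
  have hbounded := hper.isBounded_of_continuous (scaledEllipticF_pi_ne_zero hk) hg
  obtain ⟨C, hC⟩ := hbounded.exists_norm_le
  have hlim : Tendsto (fun j ↦ ∫ φ in -(π / 2)..π / 2, g (scaledEllipticF (landenModulus^[j] k) φ))
      atTop (𝓝 (∫ φ in -(π / 2)..π / 2, g (scaledEllipticF 1 φ))) := by
    refine intervalIntegral.tendsto_integral_filter_of_dominated_convergence (fun _ ↦ C)
      (Eventually.of_forall fun j ↦ ?_)
      (Eventually.of_forall fun j ↦ Eventually.of_forall fun φ _ ↦ hC _ (mem_range_self _))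
      intervalIntegrable_const ?_
    · have hj := landenModulus_iterate_mem_Ioo hk j
      exact (hg.comp (continuous_scaledEllipticF
        (pow_lt_one₀ hj.1.le hj.2 two_ne_zero))).aestronglyMeasurable
    · filter_upwards [Measure.ae_ne volume (π / 2)] with φ hne hφ
      rw [uIoc_of_le (by linarith [pi_pos])] at hφ
      exact (hg.continuousAt.comp (continuousAt_scaledEllipticF_one
        ⟨hφ.1, hφ.2.lt_of_ne hne⟩)).tendsto.comp
        (tendsto_landenModulus_iterate hk)
  refine tendsto_nhds_unique (tendsto_const_nhds.congr fun j ↦ ?_) hlim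
  exact (integral_comp_scaledEllipticF_landenModulus_iterate hk hg hper j).symm

end ScaledEllipticF

section BetaIntegral

lemma betaIntegral_one_add_mul_I_div_two (b : ℝ) :
    Complex.betaIntegral ((1 + b * Complex.I) / 2) (1 - (1 + b * Complex.I) / 2)
      = π / cosh (π * b / 2) := by
  have hre : ((1 + b * Complex.I) / 2).re = 1 / 2 := by simp
  have h := Complex.Gamma_mul_Gamma_eq_betaIntegral (s := (1 + b * Complex.I) / 2)
    (t := 1 - (1 + b * Complex.I) / 2) (by rw [hre]; norm_num)
    (by rw [Complex.sub_re, hre]; norm_num)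
  rw [add_sub_cancel, Complex.Gamma_one, one_mul, Complex.Gamma_mul_Gamma_one_sub] at h
  rw [← h, Complex.ofReal_cosh, ← Complex.cos_mul_I, ← Complex.sin_add_pi_div_two]
  push_cast
  congr 2
  ring

lemma cpow_mul_cpow_one_sub_eq_exp_artanh_sin {φ : ℝ} (hφ : 0 < cos φ) (b : ℝ) :
    (((1 + sin φ) / 2 : ℝ) : ℂ) ^ ((1 + b * Complex.I) / 2 - 1)
        * (1 - ((1 + sin φ) / 2 : ℝ)) ^ (1 - (1 + b * Complex.I) / 2 - 1)
      = (2 / cos φ : ℝ) * Complex.exp (b * artanh (sin φ) * Complex.I) := by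
  have hsin := sin_mem_Ioo_of_cos_pos hφ
  have hp : 0 < (1 + sin φ) / 2 := by linarith [hsin.1]
  have hq : 0 < 1 - (1 + sin φ) / 2 := by linarith [hsin.2]
  have hsum : -(log ((1 + sin φ) / 2) + log (1 - (1 + sin φ) / 2)) / 2 = log (2 / cos φ) := by
    rw [← log_mul hp.ne' hq.ne', neg_div, ← log_sqrt (by positivity), ← log_inv]
    congr 1
    rw [show (1 + sin φ) / 2 * (1 - (1 + sin φ) / 2) = (cos φ / 2) ^ 2 by
      linear_combination -sin_sq_add_cos_sq φ / 4, sqrt_sq (by positivity), inv_div]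
  have hdiff : log ((1 + sin φ) / 2) - log (1 - (1 + sin φ) / 2) = 2 * artanh (sin φ) := by
    rw [artanh_eq_half_log (Ioo_subset_Icc_self hsin), ← log_div hp.ne' hq.ne']
    field_simp
    congr 2
    ring
  rw [← Complex.ofReal_one, ← Complex.ofReal_sub,
    Complex.cpow_def_of_ne_zero (by exact_mod_cast hp.ne'),
    Complex.cpow_def_of_ne_zero (by exact_mod_cast hq.ne'), ← Complex.ofReal_log hp.le,
    ← Complex.ofReal_log hq.le, ← Complex.exp_add, ← exp_log (div_pos two_pos hφ), ← hsum,
    Complex.ofReal_exp, ← Complex.exp_add]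
  have hdiff' := congrArg ((↑) : ℝ → ℂ) hdiff
  push_cast at hdiff' ⊢
  congr 1
  linear_combination b * Complex.I / 2 * hdiff'

-- The substitution `x = (1 + sin φ) / 2` turns the Beta integral into the one on the left.
lemma integral_exp_mul_artanh_sin (b : ℝ) :
    ∫ φ in -(π / 2)..π / 2, Complex.exp (↑(b * artanh (sin φ)) * Complex.I)
      = π / cosh (π * b / 2) := by
  have hle : -(π / 2) ≤ π / 2 := by linarith [pi_pos]
  have hcos {φ : ℝ} (hφ : φ ∈ Ioo (-(π / 2)) (π / 2)) : 0 < cos φ := cos_pos_of_mem_Ioo hφ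
  have hsubst := intervalIntegral.integral_deriv_smul_comp_of_deriv_nonneg
    (a := -(π / 2)) (b := π / 2) (f := fun φ ↦ (1 + sin φ) / 2) (f' := fun φ ↦ cos φ / 2)
    (g := fun x : ℝ ↦ (x : ℂ) ^ ((1 + b * Complex.I) / 2 - 1)
      * (1 - (x : ℂ)) ^ (1 - (1 + b * Complex.I) / 2 - 1))
    (by fun_prop) (fun φ _ ↦ ((hasDerivAt_sin φ).const_add 1).div_const 2)
    (by
      rw [min_eq_left hle, max_eq_right hle]
      exact fun φ hφ ↦ (half_pos (hcos hφ)).le)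
  simp only [sin_neg, sin_pi_div_two, add_neg_cancel, zero_div, one_add_one_eq_two,
    div_self (two_ne_zero' ℝ)] at hsubst
  rw [← betaIntegral_one_add_mul_I_div_two, Complex.betaIntegral, ← hsubst]
  refine intervalIntegral.integral_congr_Ioo_of_le hle fun φ hφ ↦ ?_
  have hφ' := (half_pos (hcos hφ)).ne'
  simp only [Function.comp_apply]
  rw [cpow_mul_cpow_one_sub_eq_exp_artanh_sin (hcos hφ), Complex.real_smul, ← mul_assoc,
    ← Complex.ofReal_mul (cos φ / 2), ← inv_div (cos φ), mul_inv_cancel₀ hφ', Complex.ofReal_one,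
    one_mul, Complex.ofReal_mul]

end BetaIntegral

section MelnikovIntegral

variable {k a : ℝ}

lemma exp_ellipticF_add_pi (hk : k ^ 2 < 1) (a φ : ℝ) :
    Complex.exp (↑(a * ellipticF k (φ + π)) * Complex.I)
      = Complex.exp (↑(2 * a * Kell k) * Complex.I)
        • Complex.exp (↑(a * ellipticF k φ) * Complex.I) := by
  rw [ellipticF_add_pi hk, smul_eq_mul, ← Complex.exp_add]
  congr 1
  push_cast
  ring

lemma exp_two_mul_mul_Kell_eq_one_iff {m n : ℕ} (hn : n ≠ 0) (ha : a * (n * Kell k) = m * π) :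
    Complex.exp (↑(2 * a * Kell k) * Complex.I) = 1 ↔ n ∣ m := by
  have hn0 : (n : ℝ) ≠ 0 := Nat.cast_ne_zero.2 hn
  constructor
  · rw [Complex.exp_eq_one_iff]
    rintro ⟨j, hj⟩
    have hj' : 2 * a * Kell k = j * (2 * π) := by simpa using congrArg Complex.im hj
    have hmj : (m : ℝ) = n * j :=
      mul_right_cancel₀ pi_pos.ne' (by linear_combination (n : ℝ) / 2 * hj' - ha)
    exact Int.natCast_dvd_natCast.1 ⟨j, by exact_mod_cast hmj⟩
  · rintro ⟨j, rfl⟩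
    have haj : 2 * a * Kell k = j * (2 * π) := by
      push_cast at ha
      exact mul_left_cancel₀ hn0 (by linear_combination 2 * ha)
    rw [haj]
    push_cast
    rw [mul_assoc, Complex.exp_nat_mul_two_pi_mul_I]

lemma integral_exp_ellipticF_of_exp_eq_one (hk : k ∈ Ioo 0 1)
    (ha : Complex.exp (↑(2 * a * Kell k) * Complex.I) = 1) :
    ∫ φ in -(π / 2)..π / 2, Complex.exp (↑(a * ellipticF k φ) * Complex.I)
      = π / cosh (a * Kell √(1 - k ^ 2)) := by
  set K' := Kell √(1 - k ^ 2)
  have hscale (φ : ℝ) : K' * scaledEllipticF k φ = ellipticF k φ :=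
    mul_div_cancel₀ _ (Kell_sqrt_one_sub_sq_pos hk).ne'
  have hper : Function.Periodic (fun u : ℝ ↦ Complex.exp (↑(a * (K' * u)) * Complex.I))
      (scaledEllipticF k π) := fun u ↦ by
    have hphase : a * (K' * (u + scaledEllipticF k π)) = a * (K' * u) + 2 * a * Kell k := by
      rw [mul_add, hscale, ellipticF_pi (pow_lt_one₀ hk.1.le hk.2 two_ne_zero)]
      ring
    simp only [hphase, Complex.ofReal_add (a * (K' * u)), add_mul, Complex.exp_add, ha, mul_one]
  have hone : ∀ φ ∈ Ioo (-(π / 2)) (π / 2),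
      a * (K' * scaledEllipticF 1 φ) = 2 * a * K' / π * artanh (sin φ) := fun φ hφ ↦ by
    rw [scaledEllipticF, ellipticF_one hφ, one_pow, sub_self, sqrt_zero, Kell_zero]
    field_simp
  have hle : -(π / 2) ≤ π / 2 := by linarith [pi_pos]
  calc ∫ φ in -(π / 2)..π / 2, Complex.exp (↑(a * ellipticF k φ) * Complex.I)
      = ∫ φ in -(π / 2)..π / 2, Complex.exp (↑(a * (K' * scaledEllipticF 1 φ)) * Complex.I) := by
        rw [← integral_comp_scaledEllipticF hk (by fun_prop) hper]
        simp only [hscale]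
    _ = ∫ φ in -(π / 2)..π / 2,
          Complex.exp (↑(2 * a * K' / π * artanh (sin φ)) * Complex.I) :=
        intervalIntegral.integral_congr_Ioo_of_le hle fun φ hφ ↦ by
          simp only [hone φ hφ]
    _ = π / cosh (a * K') := by
        rw [integral_exp_mul_artanh_sin]
        field_simp

theorem integral_exp_ellipticF (hk : k ∈ Ioo 0 1) {m n : ℕ} (hn : n ≠ 0)
    (ha : a * (n * Kell k) = m * π) :
    ∫ s in (0 : ℝ)..n * π, Complex.exp (↑(a * ellipticF k s) * Complex.I)
      = ↑(if n ∣ m then n * π / cosh (a * Kell √(1 - k ^ 2)) else 0) := by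
  have hk2 : k ^ 2 < 1 := pow_lt_one₀ hk.1.le hk.2 two_ne_zero
  have hF := continuous_ellipticF hk2
  have hroot := exp_two_mul_mul_Kell_eq_one_iff hn ha
  rw [← zero_add (n * π)]
  split_ifs with hnm
  · have hper : Function.Periodic
        (fun s ↦ Complex.exp (↑(a * ellipticF k s) * Complex.I)) π := fun s ↦ by
      simp only [exp_ellipticF_add_pi hk2, hroot.2 hnm, one_smul]
    rw [intervalIntegral_add_nat_mul_of_periodic (by fun_prop) hper n 0 (-(π / 2)),
      neg_add_eq_sub, sub_half, integral_exp_ellipticF_of_exp_eq_one hk (hroot.2 hnm)]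
    simp [mul_div_assoc]
  · have hpow : Complex.exp (↑(2 * a * Kell k) * Complex.I) ^ n = 1 := by
      have hna : (n : ℂ) * (↑(2 * a * Kell k) * Complex.I) = m * (2 * π * Complex.I) := by
        have ha' : (a : ℂ) * (n * Kell k) = m * π := by exact_mod_cast ha
        push_cast
        linear_combination 2 * Complex.I * ha'
      rw [← Complex.exp_nat_mul, hna, Complex.exp_nat_mul_two_pi_mul_I]
    rw [intervalIntegral_eq_zero_of_add_eq_smul (exp_ellipticF_add_pi hk2 a) hpow
      (mt hroot.1 hnm), Complex.ofReal_zero]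

lemma integral_cos_ellipticF_add (hk : k ∈ Ioo 0 1) {m n : ℕ} (hn : n ≠ 0)
    (ha : a * (n * Kell k) = m * π) (θ : ℝ) :
    ∫ s in (0 : ℝ)..n * π, cos (a * ellipticF k s + θ)
      = (if n ∣ m then n * π / cosh (a * Kell √(1 - k ^ 2)) else 0) * cos θ := by
  have hF := continuous_ellipticF (pow_lt_one₀ hk.1.le hk.2 two_ne_zero)
  have hcos (s : ℝ) : cos (a * ellipticF k s + θ)
      = RCLike.re (Complex.exp (↑(a * ellipticF k s) * Complex.I)
        * Complex.exp (↑θ * Complex.I)) := by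
    rw [← Complex.exp_add, ← add_mul, ← Complex.ofReal_add]
    exact (Complex.exp_ofReal_mul_I_re _).symm
  simp only [hcos]
  rw [intervalIntegral.intervalIntegral_re (Continuous.intervalIntegrable (by fun_prop) _ _),
    intervalIntegral.integral_mul_const, integral_exp_ellipticF hk hn ha]
  simp [Complex.exp_ofReal_mul_I_re]

end MelnikovIntegral

/-- `p` and `q` are the angle and the angular velocity of a solution, defined for all times, of
the unperturbed pendulum `p' = q`, `q' = -sin p`. -/
structure IsPendulumSolution (p q : ℝ → ℝ) : Prop where
  hasDerivAt_angle : ∀ t, HasDerivAt p (q t) t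
  hasDerivAt_velocity : ∀ t, HasDerivAt q (-sin (p t)) t

namespace IsPendulumSolution

variable {p q : ℝ → ℝ} {k : ℝ}

lemma neg (h : IsPendulumSolution p q) : IsPendulumSolution (-p) (-q) where
  hasDerivAt_angle t := (h.hasDerivAt_angle t).neg
  hasDerivAt_velocity t := by simpa using (h.hasDerivAt_velocity t).neg

lemma continuous_velocity (h : IsPendulumSolution p q) : Continuous q :=
  continuous_iff_continuousAt.2 fun t ↦ (h.hasDerivAt_velocity t).continuousAt

lemma energy_eq (h : IsPendulumSolution p q) (s t : ℝ) :
    1 - cos (p s) + q s ^ 2 / 2 = 1 - cos (p t) + q t ^ 2 / 2 := by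
  have hd (t : ℝ) : HasDerivAt (fun t ↦ 1 - cos (p t) + q t ^ 2 / 2) 0 t := by
    refine (((h.hasDerivAt_angle t).cos.const_sub 1).add
      (((h.hasDerivAt_velocity t).pow 2).div_const 2)).congr_deriv ?_
    push_cast
    ring
  exact is_const_of_deriv_eq_zero (fun t ↦ (hd t).differentiableAt) (fun t ↦ (hd t).deriv) s t

lemma velocity_sq_eq (h : IsPendulumSolution p q) (hk0 : k ≠ 0) (hk : k ^ 2 < 1) (hp : p 0 = 0)
    (hq : q 0 = 2 / k) (t : ℝ) : q t ^ 2 = (2 / k * legendreDelta k (p t / 2)) ^ 2 := by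
  have henergy := h.energy_eq t 0
  have hsin : sin (p t / 2) ^ 2 = (1 - cos (p t)) / 2 := by
    rw [sin_sq_eq_half_sub, mul_div_cancel₀ _ two_ne_zero]
    ring
  rw [hp, hq, cos_zero] at henergy
  rw [mul_pow, legendreDelta_sq hk, hsin]
  field_simp at henergy ⊢
  linear_combination henergy

lemma velocity_eq (h : IsPendulumSolution p q) (hk : k ∈ Ioo 0 1) (hp : p 0 = 0)
    (hq : q 0 = 2 / k) (t : ℝ) : q t = 2 / k * legendreDelta k (p t / 2) := by
  have hk2 : k ^ 2 < 1 := pow_lt_one₀ hk.1.le hk.2 two_ne_zero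
  have hsq := h.velocity_sq_eq hk.1.ne' hk2 hp hq
  have hpos (t : ℝ) : 0 < 2 / k * legendreDelta k (p t / 2) :=
    mul_pos (div_pos two_pos hk.1) (legendreDelta_pos hk2 _)
  have hq_pos : 0 < q t := by
    by_contra! hneg
    obtain ⟨s, hs⟩ := mem_range_of_exists_le_of_exists_ge h.continuous_velocity ⟨t, hneg⟩
      ⟨0, by rw [hq]; exact (div_pos two_pos hk.1).le⟩
    have := hsq s
    rw [hs, zero_pow two_ne_zero] at this
    exact (pow_pos (hpos s) 2).ne this
  exact (pow_left_inj₀ hq_pos.le (hpos t).le two_ne_zero).1 (hsq t)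

lemma ellipticF_half_angle (h : IsPendulumSolution p q) (hk : k ∈ Ioo 0 1) (hp : p 0 = 0)
    (hq : q 0 = 2 / k) (t : ℝ) : ellipticF k (p t / 2) = t / k := by
  have hk2 : k ^ 2 < 1 := pow_lt_one₀ hk.1.le hk.2 two_ne_zero
  have hd (t : ℝ) : HasDerivAt (fun t ↦ ellipticF k (p t / 2) - t / k) 0 t := by
    refine (((hasDerivAt_ellipticF hk2 _).comp t ((h.hasDerivAt_angle t).div_const 2)).sub
      ((hasDerivAt_id t).div_const k)).congr_deriv ?_
    have hΔ := (legendreDelta_pos hk2 (p t / 2)).ne'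
    have hk0 := hk.1.ne'
    rw [h.velocity_eq hk hp hq]
    field_simp
    ring
  have hconst := is_const_of_deriv_eq_zero (fun t ↦ (hd t).differentiableAt)
    (fun t ↦ (hd t).deriv) t 0
  simpa [hp, sub_eq_zero] using hconst

lemma half_angle_nat_mul_period (h : IsPendulumSolution p q) (hk : k ∈ Ioo 0 1) (hp : p 0 = 0)
    (hq : q 0 = 2 / k) (n : ℕ) : p (2 * n * k * Kell k) / 2 = n * π := by
  have hk2 : k ^ 2 < 1 := pow_lt_one₀ hk.1.le hk.2 two_ne_zero
  refine (strictMono_ellipticF hk2).injective ?_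
  have hk0 := hk.1.ne'
  rw [h.ellipticF_half_angle hk hp hq, ellipticF_nat_mul_pi hk2]
  field_simp

lemma integral_velocity_mul (h : IsPendulumSolution p q) (hk : k ∈ Ioo 0 1) (hp : p 0 = 0)
    (hq : q 0 = 2 / k) (n : ℕ) {f : ℝ → ℝ} (hf : Continuous f) :
    ∫ t in (0 : ℝ)..2 * n * k * Kell k, q t * f (p t / 2) = 2 * ∫ s in (0 : ℝ)..n * π, f s := by
  have hsubst := intervalIntegral.integral_comp_mul_deriv (a := 0) (b := 2 * n * k * Kell k)
    (fun t _ ↦ (h.hasDerivAt_angle t).div_const 2)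
    (h.continuous_velocity.div_const 2).continuousOn hf
  rw [h.half_angle_nat_mul_period hk hp hq, hp, zero_div] at hsubst
  rw [← hsubst, ← intervalIntegral.integral_const_mul]
  refine intervalIntegral.integral_congr fun t _ ↦ ?_
  simp only [Function.comp_apply]
  ring

theorem integral_melnikov (h : IsPendulumSolution p q) (hk : k ∈ Ioo 0 1) (hp : p 0 = 0)
    (hq : q 0 = 2 / k) {m n : ℕ} (hn : n ≠ 0) {ω : ℝ} (hω : k * ω * (n * Kell k) = m * π)
    (β δ θ : ℝ) :
    ∫ t in (0 : ℝ)..2 * n * k * Kell k, q t * (β * cos (ω * t + θ) - δ * q t)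
      = -8 * n * δ * Eell k / k
        + (if n ∣ m then 2 * π * n * (1 / cosh (k * ω * Kell √(1 - k ^ 2))) else 0)
          * β * cos θ := by
  have hF := continuous_ellipticF (pow_lt_one₀ hk.1.le hk.2 two_ne_zero)
  have hk0 := hk.1.ne'
  have hamplitude (t : ℝ) : β * cos (ω * t + θ) - δ * q t
      = β * cos (k * ω * ellipticF k (p t / 2) + θ)
        - δ * (2 / k) * legendreDelta k (p t / 2) := by
    have hphase : k * ω * (t / k) = ω * t := by field_simp
    rw [h.ellipticF_half_angle hk hp hq, hphase, h.velocity_eq hk hp hq]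
    ring
  simp only [hamplitude]
  rw [h.integral_velocity_mul hk hp hq n (by fun_prop)
    (f := fun s ↦ β * cos (k * ω * ellipticF k s + θ) - δ * (2 / k) * legendreDelta k s),
    intervalIntegral.integral_sub (Continuous.intervalIntegrable (by fun_prop) _ _)
      (Continuous.intervalIntegrable (by fun_prop) _ _), intervalIntegral.integral_const_mul,
    intervalIntegral.integral_const_mul, integral_cos_ellipticF_add hk hn hω,
    integral_legendreDelta_zero_nat_mul_pi]
  split_ifs <;> ring

end IsPendulumSolution

theorem stmt_14_general (k : ℝ) (hk : k ∈ Set.Ioo (0 : ℝ) 1) (m n : ℕ) (hm : 0 < m) (hn : 0 < n)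
    (ω : ℝ) (hω : ω = π * m / (n * k * Kell k)) (σ : ℝ) (hσ : σ = 1 ∨ σ = -1)
    (x : ℝ → ℝ × ℝ) (hx0 : x 0 = (0, σ * (2 / k)))
    (hx1 : ∀ t : ℝ, HasDerivAt (fun s => (x s).1) ((x t).2) t)
    (hx2 : ∀ t : ℝ, HasDerivAt (fun s => (x s).2) (-Real.sin ((x t).1)) t)
    (β δ θ : ℝ) :
    ∫ t in (0 : ℝ)..(2 * π * m / ω), (x t).2 * (β * Real.cos (ω * t + θ) - δ * (x t).2)
      = -8 * n * δ * Eell k / k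
        + σ * (if n ∣ m then
            2 * π * n * (1 / Real.cosh (k * ω * Kell (Real.sqrt (1 - k ^ 2)))) else 0)
          * β * Real.cos θ := by
  have hK := Kell_pos (pow_lt_one₀ hk.1.le hk.2 two_ne_zero)
  have hk0 := hk.1
  have hperiod : 2 * π * m / ω = 2 * n * k * Kell k := by
    rw [hω]
    field_simp
  have hresonance : k * ω * (n * Kell k) = m * π := by
    rw [hω]
    field_simp
  have hx : IsPendulumSolution (fun t ↦ (x t).1) (fun t ↦ (x t).2) := ⟨hx1, hx2⟩
  rw [hperiod]
  rcases hσ with rfl | rfl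
  · simpa using hx.integral_melnikov hk (by simp [hx0]) (by simp [hx0]) hn.ne' hresonance β δ θ
  · have hneg := hx.neg.integral_melnikov hk (by simp [hx0]) (by simp [hx0]) hn.ne' hresonance
      (-β) δ θ
    simp only [Pi.neg_apply] at hneg
    calc ∫ t in (0 : ℝ)..2 * n * k * Kell k, (x t).2 * (β * cos (ω * t + θ) - δ * (x t).2)
        = ∫ t in (0 : ℝ)..2 * n * k * Kell k,
            -(x t).2 * (-β * cos (ω * t + θ) - δ * -(x t).2) := by
          congr with t
          ring
      _ = _ := by
          rw [hneg]
          ring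

/-- Let `k ∈ (0,1)`, `m, n` relatively prime positive integers with `ω = πm/(nkK(k))`.
Then for all real `β, δ, θ` and for each sign `σ = ±1`, the subharmonic Melnikov integral of
the forced damped pendulum along the rotational orbit `x̃^k_σ` (the solution of `ẋ₁ = x₂`,
`ẋ₂ = −sin x₁` with `x̃^k_σ(0) = (0, σ·2/k)`) evaluates as
`∫₀^{2πm/ω} x̃^k_{σ,2}(t)(β cos(ωt+θ) − δ x̃^k_{σ,2}(t)) dt = −8nδE(k)/k + σ J̃₂ β cos θ`,
with `J̃₂ = 2π sech(kωK(k'))` if `n = 1`, and `J̃₂ = 0` if `n ≠ 1`. -/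
theorem stmt_14 (k : ℝ) (hk : k ∈ Set.Ioo (0 : ℝ) 1) (m n : ℕ) (hm : 0 < m) (hn : 0 < n)
    (hmn : Nat.Coprime m n) (ω : ℝ) (hω : ω = π * m / (n * k * Kell k))
    (σ : ℝ) (hσ : σ = 1 ∨ σ = -1)
    (x : ℝ → ℝ × ℝ) (hx0 : x 0 = (0, σ * (2 / k)))
    (hx1 : ∀ t : ℝ, HasDerivAt (fun s => (x s).1) ((x t).2) t)
    (hx2 : ∀ t : ℝ, HasDerivAt (fun s => (x s).2) (-Real.sin ((x t).1)) t)
    (β δ θ : ℝ) :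
    ∫ t in (0 : ℝ)..(2 * π * m / ω), (x t).2 * (β * Real.cos (ω * t + θ) - δ * (x t).2)
      = -8 * n * δ * Eell k / k
        + σ * (if n = 1 then 2 * π * (1 / Real.cosh (k * ω * Kell (Real.sqrt (1 - k ^ 2)))) else 0)
          * β * Real.cos θ := by
  have hnm : n ∣ m ↔ n = 1 :=
    ⟨fun h ↦ Nat.eq_one_of_dvd_coprimes hmn h dvd_rfl, fun h ↦ h ▸ one_dvd m⟩
  rw [stmt_14_general k hk m n hm hn ω hω σ hσ x hx0 hx1 hx2, if_congr hnm rfl rfl]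
  split_ifs with h <;> simp [h]
end

section
/- Let k ∈ (0, 1) and k' = √(1 − k²). There exists a meromorphic function y on a domain of ℂ containing ℝ and the point iK(k') such that: y agrees on ℝ with the second component x^k₂ of the solution of ẋ₁ = x₂, ẋ₂ = −sin x₁ with x^k(0) = (0, 2k); y satisfies the algebraic differential equation (y')² = 1 − (1 − 2k² + y²/2)² wherever it is finite; y has a simple pole at t = iK(k') with residue −2i; and for all ω > 0, all real β, δ, θ, and all sufficiently small ρ > 0, the contour integral over the positively oriented circle |t − iK(k')| = ρ satisfies ∮ y(t)(β cos(ωt + θ) − δ y(t)) dt = 4πβ(cosh(ωK(k')) cos θ − i sinh(ωK(k')) sin θ); in particular this contour integral is nonzero for every θ whenever β > 0. -/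
open Real Filter Topology

/-!
Along the orbit, `x₂ = 2k cn(t, k)`. With `sn, cn, dn` known on `ℝ` for the modulus `k` and for the
complementary modulus `k'`, the addition formula and Jacobi's imaginary transformation define `cn`
on all of `ℂ` away from the zeros of a denominator, and the Cauchy–Riemann equations reduce to
polynomial identities. Interchanging `k` and `k'` gives `nc = 1 / cn`, which is holomorphic at those
zeros, so `cn` is meromorphic on `ℂ`. At the simple pole `iK(k')` of `y = 2k cn` the differential
equation is quartic in `y`, which forces the constant Laurent coefficient of `y` to vanish; hence
`y²` has residue zero and the contour integral is
`2πi · (-2i) · β cos(iωK(k') + θ)`. It is nonzero because the zeros of `cos` are real.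
-/

open scoped ComplexConjugate

section Poles

variable {E : Type*} [NormedAddCommGroup E] [NormedSpace ℂ E] [CompleteSpace E]

theorem exists_analyticAt_eq_inv_smul_of_tendsto {f : ℂ → E} {p : ℂ} {r : E}
    (hf : MeromorphicAt f p) (hr : Tendsto (fun z => (z - p) • f z) (𝓝[≠] p) (𝓝 r)) :
    ∃ g : ℂ → E, AnalyticAt ℂ g p ∧ g p = r ∧ ∀ᶠ z in 𝓝[≠] p, f z = (z - p)⁻¹ • g z := by
  have hne : ∀ᶠ z in 𝓝[≠] p, z ≠ p := eventually_mem_nhdsWithin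
  refine ⟨Function.update (fun z => (z - p) • f z) p r, ?_, Function.update_self .., ?_⟩
  · refine Complex.analyticAt_of_differentiable_on_punctured_nhds_of_continuousAt ?_
      (continuousAt_update_same.2 hr)
    filter_upwards [hf.eventually_analyticAt, hne] with z hz hzp
    have hdiff : DifferentiableAt ℂ (fun z => (z - p) • f z) z :=
      (differentiableAt_id.sub_const p).smul hz.differentiableAt
    exact hdiff.congr_of_eventuallyEq
      (eventually_of_mem (isOpen_ne.mem_nhds hzp) fun w hw => Function.update_of_ne hw ..)
  · filter_upwards [hne] with z hz
    rw [Function.update_of_ne hz, inv_smul_smul₀ (sub_ne_zero.2 hz)]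

theorem tendsto_sub_mul_inv_of_hasDerivAt {𝕜 : Type*} [NontriviallyNormedField 𝕜] {f : 𝕜 → 𝕜}
    {f' z : 𝕜} (hf : HasDerivAt f f' z) (hz : f z = 0) (hf' : f' ≠ 0) :
    Tendsto (fun w => (w - z) * (f w)⁻¹) (𝓝[≠] z) (𝓝 f'⁻¹) := by
  refine ((hasDerivAt_iff_tendsto_slope.1 hf).inv₀ hf').congr fun w => ?_
  rw [slope_def_field, hz, sub_zero, inv_div, div_eq_mul_inv]

theorem eventually_deriv_eq_of_eq_inv_mul {y g : ℂ → ℂ} {p : ℂ} (hg : AnalyticAt ℂ g p)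
    (hy : ∀ᶠ z in 𝓝[≠] p, y z = (z - p)⁻¹ * g z) :
    ∀ᶠ z in 𝓝[≠] p, deriv y z = ((z - p) * deriv g z - g z) / (z - p) ^ 2 := by
  filter_upwards [eventually_eventually_nhdsWithin.2 hy,
    eventually_nhdsWithin_of_eventually_nhds hg.eventually_analyticAt,
    eventually_mem_nhdsWithin] with z hyz hgz hzp
  have hzp' : z - p ≠ 0 := sub_ne_zero.2 hzp
  rw [isOpen_compl_singleton.nhdsWithin_eq hzp] at hyz
  rw [EventuallyEq.deriv_eq hyz]
  refine ((((hasDerivAt_id z).sub_const p).inv hzp').mul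
    hgz.differentiableAt.hasDerivAt).deriv.trans ?_
  simp only [id_eq, Pi.inv_apply]
  field_simp
  ring

/-- Multiplied by `(z - p) ^ 4`, the equation compares `((z - p) * g' - g) ^ 2` with
`a₄ * g ^ 4 + O((z - p) ^ 2)`; the derivatives of the two sides at `p` are `0` and
`4 * a₄ * g p ^ 3 * g' p`. -/
theorem deriv_eq_zero_of_quartic_ode {y g : ℂ → ℂ} {p a₀ a₁ a₂ a₄ : ℂ} (hg : AnalyticAt ℂ g p)
    (hgp : g p ≠ 0) (ha₄ : a₄ ≠ 0) (hy : ∀ᶠ z in 𝓝[≠] p, y z = (z - p)⁻¹ * g z)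
    (hode : ∀ᶠ z in 𝓝[≠] p,
      deriv y z ^ 2 = a₄ * y z ^ 4 + a₂ * y z ^ 2 + a₁ * y z + a₀) :
    deriv g p = 0 := by
  set F : ℂ → ℂ := fun z => ((z - p) * deriv g z - g z) ^ 2 with hF
  set G : ℂ → ℂ := fun z => a₄ * g z ^ 4 + (z - p) ^ 2 * (a₂ * g z ^ 2 + (z - p) *
    (a₁ * g z + (z - p) * a₀)) with hG
  have hid : HasDerivAt (fun z => z - p) 1 p := (hasDerivAt_id p).sub_const p
  have hg₁ : HasDerivAt g (deriv g p) p := hg.differentiableAt.hasDerivAt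
  have hg₂ : HasDerivAt (deriv g) (deriv (deriv g) p) p :=
    hg.deriv.differentiableAt.hasDerivAt
  have hF' : HasDerivAt F 0 p :=
    (((hid.mul hg₂).sub hg₁).pow 2).congr_deriv (by simp)
  have hG' : HasDerivAt G (4 * a₄ * g p ^ 3 * deriv g p) p := by
    refine (((hg₁.pow 4).const_mul a₄).add ((hid.pow 2).mul (((hg₁.pow 2).const_mul a₂).add
      (hid.mul ((hg₁.const_mul a₁).add (hid.mul_const a₀)))))).congr_deriv ?_
    simp only [sub_self, Pi.add_apply, Pi.mul_apply, Pi.pow_apply]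
    ring
  have hFG : F =ᶠ[𝓝[≠] p] G := by
    filter_upwards [hode, hy, eventually_deriv_eq_of_eq_inv_mul hg hy,
      eventually_mem_nhdsWithin] with z hode hyz hydz hzp
    have hzp' : z - p ≠ 0 := sub_ne_zero.2 hzp
    rw [hydz, hyz] at hode
    field_simp at hode
    simp only [hF, hG]
    linear_combination hode
  have hFG' : F =ᶠ[𝓝 p] G :=
    (hF'.continuousAt.eventuallyEq_nhds_iff_eventuallyEq_nhdsNE hG'.continuousAt).1 hFG
  simpa [hgp, ha₄] using hG'.unique (hF'.congr_of_eventuallyEq hFG'.symm)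

theorem eventually_circleIntegral_eq_two_pi_I_smul_deriv {f G : ℂ → E} {p : ℂ}
    (hG : AnalyticAt ℂ G p) (hf : ∀ᶠ z in 𝓝[≠] p, f z = ((z - p) ^ 2)⁻¹ • G z) :
    ∀ᶠ ρ in 𝓝[>] (0 : ℝ), (∮ z in C(p, ρ), f z) = (2 * π * Complex.I) • deriv G p := by
  obtain ⟨r, hr, hball⟩ := Metric.eventually_nhds_iff_ball.1
    (hG.eventually_analyticAt.and (eventually_nhdsWithin_iff.1 hf))
  filter_upwards [Ioo_mem_nhdsGT hr] with ρ hρ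
  have hcongr : (∮ z in C(p, ρ), f z) = ∮ z in C(p, ρ), ((z - p) ^ 2)⁻¹ • G z :=
    circleIntegral.integral_congr hρ.1.le fun z hz =>
      (hball z (Metric.sphere_subset_closedBall.trans
        (Metric.closedBall_subset_ball hρ.2) hz)).2 (Metric.ne_of_mem_sphere hz hρ.1.ne')
  rw [hcongr, ← inv_smul_eq_iff₀ Complex.two_pi_I_ne_zero]
  exact Complex.two_pi_I_inv_smul_circleIntegral_sub_sq_inv_smul_of_differentiable
    Metric.isOpen_ball (Metric.closedBall_subset_ball hρ.2)
    (fun z hz => (hball z hz).1.differentiableAt.differentiableWithinAt)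
    (Metric.mem_ball_self hρ.1)

theorem eventually_circleIntegral_mul_sub_mul_eq {y g u : ℂ → ℂ} {p : ℂ}
    (hg : AnalyticAt ℂ g p) (hg' : deriv g p = 0) (hu : AnalyticAt ℂ u p)
    (hy : ∀ᶠ z in 𝓝[≠] p, y z = (z - p)⁻¹ * g z) (δ : ℂ) :
    ∀ᶠ ρ in 𝓝[>] (0 : ℝ),
      (∮ z in C(p, ρ), y z * (u z - δ * y z)) = 2 * π * Complex.I * (g p * u p) := by
  have hG : AnalyticAt ℂ (fun z => g z * ((z - p) * u z - δ * g z)) p := by fun_prop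
  have hG' : HasDerivAt (fun z => g z * ((z - p) * u z - δ * g z)) (g p * u p) p := by
    have hg₁ : HasDerivAt g 0 p := hg' ▸ hg.differentiableAt.hasDerivAt
    refine (hg₁.mul ((((hasDerivAt_id p).sub_const p).mul hu.differentiableAt.hasDerivAt).sub
      (hg₁.const_mul δ))).congr_deriv ?_
    simp
  rw [← hG'.deriv]
  refine eventually_circleIntegral_eq_two_pi_I_smul_deriv hG ?_
  filter_upwards [hy, eventually_mem_nhdsWithin] with z hyz hzp
  have hzp' : z - p ≠ 0 := sub_ne_zero.2 hzp
  rw [hyz, smul_eq_mul]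
  field_simp

end Poles

theorem exists_leftInverse_hasDerivAt_of_le_deriv {f f' : ℝ → ℝ} {c : ℝ} (hc : 0 < c)
    (hf : ∀ t, HasDerivAt f (f' t) t) (hf' : ∀ t, c ≤ f' t) :
    ∃ g : ℝ → ℝ, Function.LeftInverse g f ∧ ∀ t, HasDerivAt g (f' (g t))⁻¹ t := by
  have hdiff : Differentiable ℝ f := fun t => (hf t).differentiableAt
  have hderiv : ∀ t, c ≤ deriv f t := fun t => (hf t).deriv ▸ hf' t
  have hmono : StrictMono f := strictMono_of_deriv_pos fun t => hc.trans_le (hderiv t)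
  have hgrowth := mul_sub_le_image_sub_of_le_deriv hdiff hderiv
  have htop : Tendsto f atTop atTop := by
    refine tendsto_atTop_mono' atTop ?_
      (tendsto_atTop_add_const_left atTop (f 0) (tendsto_id.const_mul_atTop hc))
    filter_upwards [eventually_ge_atTop 0] with t ht
    simpa [le_sub_iff_add_le'] using hgrowth ht
  have hbot : Tendsto f atBot atBot := by
    refine tendsto_atBot_mono' atBot ?_
      (tendsto_atBot_add_const_left atBot (f 0) (tendsto_id.const_mul_atBot hc))
    filter_upwards [eventually_le_atBot 0] with t ht
    have := hgrowth ht
    rw [id_eq]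
    linarith
  let e := hmono.orderIsoOfSurjective f (hdiff.continuous.surjective htop hbot)
  exact ⟨e.symm, e.symm_apply_apply, fun t =>
    (hf _).of_local_left_inverse e.symm.continuous.continuousAt (hc.trans_le (hf' _)).ne'
      (Eventually.of_forall e.apply_symm_apply)⟩

theorem one_sub_sq_mul_sin_sq_pos {κ : ℝ} (hκ : κ ^ 2 < 1) (φ : ℝ) :
    0 < 1 - κ ^ 2 * sin φ ^ 2 := by
  nlinarith [sin_sq_le_one φ, sq_nonneg κ]

/-- The amplitude, as the inverse of the incomplete elliptic integral of the first kind. -/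
theorem exists_amplitude {κ : ℝ} (hκ : κ ^ 2 < 1) :
    ∃ a : ℝ → ℝ, a 0 = 0 ∧ a (Kell κ) = π / 2 ∧
      ∀ t, HasDerivAt a √(1 - κ ^ 2 * sin (a t) ^ 2) t := by
  have hpos : ∀ φ, 0 < √(1 - κ ^ 2 * sin φ ^ 2) := fun φ =>
    sqrt_pos.2 (one_sub_sq_mul_sin_sq_pos hκ φ)
  have hcont : Continuous fun φ => 1 / √(1 - κ ^ 2 * sin φ ^ 2) :=
    continuous_const.div (by fun_prop) fun φ => (hpos φ).ne'
  have hle : ∀ φ, 1 ≤ 1 / √(1 - κ ^ 2 * sin φ ^ 2) := fun φ => by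
    rw [le_div_iff₀ (hpos φ), one_mul, sqrt_le_one, sub_le_self_iff]
    positivity
  obtain ⟨a, hleft, ha⟩ := exists_leftInverse_hasDerivAt_of_le_deriv one_pos
    (fun φ => hcont.integral_hasStrictDerivAt 0 φ |>.hasDerivAt) hle
  exact ⟨a, by simpa using hleft 0, hleft (π / 2), by simpa using ha⟩

/-- The initial value problem satisfied by the Jacobi elliptic functions `sn`, `cn`, `dn` of a real
argument and parameter `m` (the square of the modulus). -/
structure JacobiFunctions (m : ℝ) where
  sn : ℝ → ℝ
  cn : ℝ → ℝ
  dn : ℝ → ℝ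
  hasDerivAt_sn : ∀ t, HasDerivAt sn (cn t * dn t) t
  hasDerivAt_cn : ∀ t, HasDerivAt cn (-(sn t * dn t)) t
  hasDerivAt_dn : ∀ t, HasDerivAt dn (-(m * sn t * cn t)) t
  sn_zero : sn 0 = 0
  cn_zero : cn 0 = 1
  dn_zero : dn 0 = 1

/-- The Jacobi functions read off from the pendulum orbit through `(0, 2 * k)`. -/
noncomputable def JacobiFunctions.ofPendulum {k : ℝ} (hk : k ≠ 0) (x : ℝ → ℝ × ℝ)
    (hx0 : x 0 = (0, 2 * k)) (hx1 : ∀ t, HasDerivAt (fun s => (x s).1) ((x t).2) t)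
    (hx2 : ∀ t, HasDerivAt (fun s => (x s).2) (-sin ((x t).1)) t) : JacobiFunctions (k ^ 2) where
  sn t := sin ((x t).1 / 2) / k
  cn t := (x t).2 / (2 * k)
  dn t := cos ((x t).1 / 2)
  hasDerivAt_sn t := (((hx1 t).div_const 2).sin.div_const k).congr_deriv (by field_simp)
  hasDerivAt_cn t := by
    refine ((hx2 t).div_const (2 * k)).congr_deriv ?_
    have hdouble : sin (x t).1 = 2 * sin ((x t).1 / 2) * cos ((x t).1 / 2) := by
      rw [← sin_two_mul, mul_div_cancel₀ _ two_ne_zero]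
    rw [hdouble]
    field_simp
  hasDerivAt_dn t := ((hx1 t).div_const 2).cos.congr_deriv (by field_simp)
  sn_zero := by simp [hx0]
  cn_zero := by simp [hx0, hk]
  dn_zero := by simp [hx0]

/-- The Jacobi functions of modulus `κ` obtained from an amplitude `a`. -/
noncomputable def JacobiFunctions.ofAmplitude {κ : ℝ} (hκ : κ ^ 2 < 1) (a : ℝ → ℝ) (ha0 : a 0 = 0)
    (ha : ∀ t, HasDerivAt a √(1 - κ ^ 2 * sin (a t) ^ 2) t) : JacobiFunctions (κ ^ 2) where
  sn t := sin (a t)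
  cn t := cos (a t)
  dn t := √(1 - κ ^ 2 * sin (a t) ^ 2)
  hasDerivAt_sn t := (ha t).sin
  hasDerivAt_cn t := (ha t).cos.congr_deriv (neg_mul _ _)
  hasDerivAt_dn t := by
    have hpos := one_sub_sq_mul_sin_sq_pos hκ (a t)
    refine ((((ha t).sin.pow 2).const_mul (κ ^ 2)).const_sub 1).sqrt hpos.ne' |>.congr_deriv ?_
    have := (sqrt_pos.2 hpos).ne'
    simp only [Pi.pow_apply, Nat.cast_ofNat, Nat.add_one_sub_one, pow_one]
    field_simp
  sn_zero := by simp [ha0]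
  cn_zero := by simp [ha0]
  dn_zero := by simp [ha0]

namespace JacobiFunctions

theorem exists_quarter_period {κ : ℝ} (hκ : κ ^ 2 < 1) :
    ∃ J : JacobiFunctions (κ ^ 2),
      J.sn (Kell κ) = 1 ∧ J.cn (Kell κ) = 0 ∧ J.dn (Kell κ) = √(1 - κ ^ 2) := by
  obtain ⟨a, ha0, haK, ha⟩ := exists_amplitude hκ
  exact ⟨ofAmplitude hκ a ha0 ha, by simp [ofAmplitude, haK]⟩

section FirstIntegrals

variable {m : ℝ} (J : JacobiFunctions m)

theorem sn_sq_add_cn_sq (t : ℝ) : J.sn t ^ 2 + J.cn t ^ 2 = 1 := by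
  have hderiv : ∀ t, HasDerivAt (fun t => J.sn t ^ 2 + J.cn t ^ 2) 0 t := fun t =>
    (((J.hasDerivAt_sn t).pow 2).add ((J.hasDerivAt_cn t).pow 2)).congr_deriv
      (by simp only [Nat.cast_ofNat, Nat.add_one_sub_one, pow_one]; ring)
  simpa [J.sn_zero, J.cn_zero] using is_const_of_deriv_eq_zero
    (fun t => (hderiv t).differentiableAt) (fun t => (hderiv t).deriv) t 0

theorem dn_sq_add_mul_sn_sq (t : ℝ) : J.dn t ^ 2 + m * J.sn t ^ 2 = 1 := by
  have hderiv : ∀ t, HasDerivAt (fun t => J.dn t ^ 2 + m * J.sn t ^ 2) 0 t := fun t =>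
    (((J.hasDerivAt_dn t).pow 2).add (((J.hasDerivAt_sn t).pow 2).const_mul m)).congr_deriv
      (by simp only [Nat.cast_ofNat, Nat.add_one_sub_one, pow_one]; ring)
  simpa [J.sn_zero, J.dn_zero] using is_const_of_deriv_eq_zero
    (fun t => (hderiv t).differentiableAt) (fun t => (hderiv t).deriv) t 0

@[fun_prop]
theorem continuous_sn : Continuous J.sn :=
  continuous_iff_continuousAt.2 fun t => (J.hasDerivAt_sn t).continuousAt

@[fun_prop]
theorem continuous_cn : Continuous J.cn :=
  continuous_iff_continuousAt.2 fun t => (J.hasDerivAt_cn t).continuousAt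

end FirstIntegrals

end JacobiFunctions

/-- The quadratic relations between the values `S, C, D` of `sn, cn, dn` for the parameter `m` at a
point `x`, and the values `s, c, d` for the complementary parameter `m'` at a point `y`. They imply
the identities needed for the argument `x + i * y`. -/
structure IsComplementaryPair {R : Type*} [CommRing R] (m m' S C D s c d : R) : Prop where
  sn_sq_add_cn_sq : S ^ 2 + C ^ 2 = 1
  dn_sq_add_mul_sn_sq : D ^ 2 + m * S ^ 2 = 1
  sn_sq_add_cn_sq' : s ^ 2 + c ^ 2 = 1
  dn_sq_add_mul_sn_sq' : d ^ 2 + m' * s ^ 2 = 1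
  add_eq_one : m + m' = 1

namespace IsComplementaryPair

variable {R : Type*} [CommRing R] {m m' S C D s c d i : R}

theorem addition_sn_sq_add_cn_sq (h : IsComplementaryPair m m' S C D s c d) (hi : i ^ 2 = -1) :
    (S * d + i * (C * D * (s * c))) ^ 2 + (C * c - i * (S * D * (s * d))) ^ 2
      = (c ^ 2 + m * S ^ 2 * s ^ 2) ^ 2 := by
  obtain ⟨hSC, hDS, hsc, hds, hm⟩ := h
  grind

theorem addition_dn_sq_add_mul_sn_sq (h : IsComplementaryPair m m' S C D s c d) (hi : i ^ 2 = -1) :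
    (D * (c * d) - i * (m * (S * C * s))) ^ 2 + m * (S * d + i * (C * D * (s * c))) ^ 2
      = (c ^ 2 + m * S ^ 2 * s ^ 2) ^ 2 := by
  obtain ⟨hSC, hDS, hsc, hds, hm⟩ := h
  grind

theorem addition_cn_mul_conj (h : IsComplementaryPair m m' S C D s c d) (hi : i ^ 2 = -1) :
    (C * c - i * (S * D * (s * d))) * (c * C + i * (s * d * (S * D)))
      = (c ^ 2 + m * S ^ 2 * s ^ 2) * (C ^ 2 + m' * s ^ 2 * S ^ 2) := by
  obtain ⟨hSC, hDS, hsc, hds, hm⟩ := h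
  grind

/-- The left side is the numerator of `∂ cn / ∂ x` given by the quotient rule, and that of the next
identity the numerator of `∂ cn / ∂ y`; the factor `i` between them is the Cauchy–Riemann
equation. -/
theorem addition_deriv_cn_re (h : IsComplementaryPair m m' S C D s c d) (hi : i ^ 2 = -1) :
    (-(S * D * c) - i * (s * d * C * (D ^ 2 - m * S ^ 2))) * (c ^ 2 + m * S ^ 2 * s ^ 2)
        - (C * c - i * (S * D * (s * d))) * (2 * m * S * C * D * s ^ 2)
      = -((S * d + i * (C * D * (s * c))) * (D * (c * d) - i * (m * (S * C * s)))) := by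
  obtain ⟨hSC, hDS, hsc, hds, hm⟩ := h
  grind

theorem addition_deriv_cn_im (h : IsComplementaryPair m m' S C D s c d) (hi : i ^ 2 = -1) :
    (-(C * s * d) - i * (S * D * c * (d ^ 2 - m' * s ^ 2))) * (c ^ 2 + m * S ^ 2 * s ^ 2)
        - (C * c - i * (S * D * (s * d))) * (2 * m * S ^ 2 * s * c * d - 2 * c * s * d)
      = i * -((S * d + i * (C * D * (s * c))) * (D * (c * d) - i * (m * (S * C * s)))) := by
  obtain ⟨hSC, hDS, hsc, hds, hm⟩ := h
  grind

end IsComplementaryPair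

section CauchyRiemann

theorem exists_hasFDerivAt_ofReal_re_mul_im {f g : ℝ → ℝ} {f' g' : ℝ} {z : ℂ}
    (hf : HasDerivAt f f' z.re) (hg : HasDerivAt g g' z.im) :
    ∃ L : ℂ →L[ℝ] ℂ, HasFDerivAt (fun w : ℂ => (f w.re : ℂ) * g w.im) L z ∧
      L 1 = f' * g z.im ∧ L Complex.I = f z.re * g' := by
  have hre := hf.ofReal_comp.hasFDerivAt.comp z Complex.reCLM.hasFDerivAt
  have him := hg.ofReal_comp.hasFDerivAt.comp z Complex.imCLM.hasFDerivAt
  exact ⟨_, hre.mul him, by simp [mul_comm], by simp⟩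

theorem hasDerivAt_div_of_hasFDerivAt {f g : ℂ → ℂ} {f' g' : ℂ →L[ℝ] ℂ} {z e : ℂ}
    (hf : HasFDerivAt f f' z) (hg : HasFDerivAt g g' z) (hz : g z ≠ 0)
    (hone : f' 1 * g z - f z * g' 1 = e)
    (hI : f' Complex.I * g z - f z * g' Complex.I = Complex.I * e) :
    HasDerivAt (fun w => f w / g w) (e / g z ^ 2) z := by
  simp only [div_eq_mul_inv (f _)]
  have hquot := hf.mul ((hasDerivAt_inv hz).comp_hasFDerivAt z hg)
  refine (hquot.complexOfReal_hasFDerivAt ?_).hasDerivAt.congr_deriv ?_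
  · simp only [Function.comp_apply, add_apply, smul_apply, neg_apply, neg_smul, smul_neg,
      smul_eq_mul]
    field_simp
    linear_combination hI - Complex.I * hone
  · simp only [Function.comp_apply, ContinuousLinearMap.coe_complexOfReal, add_apply, smul_apply,
      neg_apply, neg_smul, smul_neg, smul_eq_mul]
    field_simp
    linear_combination hone

end CauchyRiemann

namespace JacobiFunctions

section ComplexArgument

variable {m m' : ℝ} (J : JacobiFunctions m) (J' : JacobiFunctions m')

/-- The common denominator of the addition formulas defining `complexSn`, `complexCn` and
`complexDn`. -/
def additionDen (z : ℂ) : ℝ :=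
  J'.cn z.im ^ 2 + m * J.sn z.re ^ 2 * J'.sn z.im ^ 2

/-- `sn` at a complex argument, by the addition formula for `z.re + i * z.im` and Jacobi's imaginary
transformation; `J'` has the complementary parameter. -/
noncomputable def complexSn (z : ℂ) : ℂ :=
  (J.sn z.re * J'.dn z.im + Complex.I * (J.cn z.re * J.dn z.re * (J'.sn z.im * J'.cn z.im)))
    / J.additionDen J' z

/-- `cn` at a complex argument, by the same formulas as `complexSn`; the value at a pole is `0`. -/
noncomputable def complexCn (z : ℂ) : ℂ :=
  (J.cn z.re * J'.cn z.im - Complex.I * (J.sn z.re * J.dn z.re * (J'.sn z.im * J'.dn z.im)))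
    / J.additionDen J' z

/-- `dn` at a complex argument, by the same formulas as `complexSn`. -/
noncomputable def complexDn (z : ℂ) : ℂ :=
  (J.dn z.re * (J'.cn z.im * J'.dn z.im)
    - Complex.I * (m * (J.sn z.re * J.cn z.re * J'.sn z.im))) / J.additionDen J' z

/-- The reciprocal `nc = 1 / cn`, by Jacobi's imaginary transformation `nc (z | m) = cn (i z | m')`.
The conjugations replace an appeal to the parity of `cn`. -/
noncomputable def complexNc (z : ℂ) : ℂ :=
  conj (J'.complexCn J (Complex.I * conj z))

theorem complexCn_ofReal (t : ℝ) : J.complexCn J' t = J.cn t := by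
  simp [complexCn, additionDen, J'.sn_zero, J'.cn_zero]

theorem isComplementaryPair_ofReal (h : m + m' = 1) (x y : ℝ) :
    IsComplementaryPair (m : ℂ) m' (J.sn x) (J.cn x) (J.dn x) (J'.sn y) (J'.cn y) (J'.dn y) where
  sn_sq_add_cn_sq := mod_cast J.sn_sq_add_cn_sq x
  dn_sq_add_mul_sn_sq := mod_cast J.dn_sq_add_mul_sn_sq x
  sn_sq_add_cn_sq' := mod_cast J'.sn_sq_add_cn_sq y
  dn_sq_add_mul_sn_sq' := mod_cast J'.dn_sq_add_mul_sn_sq y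
  add_eq_one := mod_cast h

theorem continuous_additionDen : Continuous (J.additionDen J') := by
  unfold additionDen
  fun_prop

variable {J J'}

theorem complexSn_sq_add_complexCn_sq (h : m + m' = 1) {z : ℂ} (hz : J.additionDen J' z ≠ 0) :
    J.complexSn J' z ^ 2 + J.complexCn J' z ^ 2 = 1 := by
  have hz' : (J.additionDen J' z : ℂ) ≠ 0 := mod_cast hz
  rw [complexSn, complexCn, div_pow, div_pow, ← add_div, div_eq_one_iff_eq (pow_ne_zero 2 hz')]
  simpa [additionDen] using
    (isComplementaryPair_ofReal J J' h z.re z.im).addition_sn_sq_add_cn_sq Complex.I_sq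

theorem complexDn_sq_add_mul_complexSn_sq (h : m + m' = 1) {z : ℂ}
    (hz : J.additionDen J' z ≠ 0) : J.complexDn J' z ^ 2 + m * J.complexSn J' z ^ 2 = 1 := by
  have hz' : (J.additionDen J' z : ℂ) ≠ 0 := mod_cast hz
  rw [complexSn, complexDn, div_pow, div_pow, ← mul_div_assoc, ← add_div,
    div_eq_one_iff_eq (pow_ne_zero 2 hz')]
  simpa [additionDen] using
    (isComplementaryPair_ofReal J J' h z.re z.im).addition_dn_sq_add_mul_sn_sq Complex.I_sq

theorem hasDerivAt_complexCn (h : m + m' = 1) {z : ℂ} (hz : J.additionDen J' z ≠ 0) :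
    HasDerivAt (J.complexCn J') (-(J.complexSn J' z * J.complexDn J' z)) z := by
  obtain ⟨P, hP, hPx, hPy⟩ :=
    exists_hasFDerivAt_ofReal_re_mul_im (J.hasDerivAt_cn z.re) (J'.hasDerivAt_cn z.im)
  obtain ⟨Q, hQ, hQx, hQy⟩ := exists_hasFDerivAt_ofReal_re_mul_im
    ((J.hasDerivAt_sn z.re).mul (J.hasDerivAt_dn z.re))
    ((J'.hasDerivAt_sn z.im).mul (J'.hasDerivAt_dn z.im))
  obtain ⟨A, hA, hAx, hAy⟩ := exists_hasFDerivAt_ofReal_re_mul_im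
    (hasDerivAt_const z.re (1 : ℝ)) ((J'.hasDerivAt_cn z.im).pow 2)
  obtain ⟨B, hB, hBx, hBy⟩ := exists_hasFDerivAt_ofReal_re_mul_im
    (((J.hasDerivAt_sn z.re).pow 2).const_mul m) ((J'.hasDerivAt_sn z.im).pow 2)
  have hnum : HasFDerivAt (fun w : ℂ => (J.cn w.re * J'.cn w.im
      - Complex.I * (J.sn w.re * J.dn w.re * (J'.sn w.im * J'.dn w.im)) : ℂ))
      (P - Complex.I • Q) z := by
    simpa using hP.fun_sub (hQ.const_mul Complex.I)
  have hden : HasFDerivAt (fun w => (J.additionDen J' w : ℂ)) (A + B) z := by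
    simpa [additionDen] using hA.fun_add hB
  have hrel := isComplementaryPair_ofReal J J' h z.re z.im
  refine (hasDerivAt_div_of_hasFDerivAt hnum hden (mod_cast hz)
    (Eq.trans ?_ (hrel.addition_deriv_cn_re Complex.I_sq))
    (Eq.trans ?_ (hrel.addition_deriv_cn_im Complex.I_sq))).congr_deriv ?_
  · simp only [sub_apply, add_apply, smul_apply, smul_eq_mul, hPx, hQx, hAx, hBx,
      additionDen, Pi.mul_apply, Pi.pow_apply, Nat.cast_ofNat, Nat.add_one_sub_one, pow_one]
    push_cast
    ring
  · simp only [sub_apply, add_apply, smul_apply, smul_eq_mul, hPy, hQy, hAy, hBy,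
      additionDen, Pi.mul_apply, Pi.pow_apply, Nat.cast_ofNat, Nat.add_one_sub_one, pow_one]
    push_cast
    ring
  · rw [complexSn, complexDn, div_mul_div_comm, ← sq, neg_div]

theorem hasDerivAt_complexNc (h : m + m' = 1) {z : ℂ}
    (hz : J'.additionDen J (Complex.I * conj z) ≠ 0) :
    HasDerivAt (J.complexNc J') (Complex.I * conj (J'.complexSn J (Complex.I * conj z) *
      J'.complexDn J (Complex.I * conj z))) z := by
  have hrot : HasDerivAt (fun w : ℂ => -Complex.I * w) (-Complex.I) z := by
    simpa using (hasDerivAt_id z).const_mul (-Complex.I)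
  have hcn := (hasDerivAt_complexCn ((add_comm m' m).trans h) hz).conj_conj
  rw [show conj (Complex.I * conj z) = -Complex.I * z by simp] at hcn
  refine ((hcn.comp z hrot).congr_of_eventuallyEq (Eventually.of_forall fun w => ?_)).congr_deriv ?_
  · simp [complexNc]
  · rw [map_neg, neg_mul_neg, mul_comm]

theorem additionDen_eq_zero_iff (hm : 0 < m) {z : ℂ} :
    J.additionDen J' z = 0 ↔ J'.cn z.im = 0 ∧ J.sn z.re = 0 := by
  have hsc := J'.sn_sq_add_cn_sq z.im
  rw [additionDen, add_eq_zero_iff_of_nonneg (by positivity) (by positivity), sq_eq_zero_iff]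
  refine and_congr_right fun hc => ?_
  have hs : J'.sn z.im ^ 2 = 1 := by simpa [hc] using hsc
  simp [hs, hm.ne']

theorem additionDen_I_mul_conj_of_additionDen_eq_zero (hm : 0 < m) {z : ℂ}
    (hz : J.additionDen J' z = 0) : J'.additionDen J (Complex.I * conj z) = 1 := by
  have hS := ((additionDen_eq_zero_iff hm).1 hz).2
  simpa [additionDen, hS] using J.sn_sq_add_cn_sq z.re

theorem complexNc_eq_zero_of_additionDen_eq_zero (hm : 0 < m) {z : ℂ}
    (hz : J.additionDen J' z = 0) : J.complexNc J' z = 0 := by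
  obtain ⟨hc, hS⟩ := (additionDen_eq_zero_iff hm).1 hz
  simp [complexNc, complexCn, hc, hS]

theorem complexCn_eq_inv_complexNc (hm : 0 < m) (h : m + m' = 1) {z : ℂ}
    (hz : J'.additionDen J (Complex.I * conj z) ≠ 0) :
    J.complexCn J' z = (J.complexNc J' z)⁻¹ := by
  by_cases hzQ : J.additionDen J' z = 0
  · simp [complexCn, hzQ, complexNc_eq_zero_of_additionDen_eq_zero hm hzQ]
  · have hden : (J.additionDen J' z * J'.additionDen J (Complex.I * conj z) : ℂ) ≠ 0 :=
      mod_cast mul_ne_zero hzQ hz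
    refine eq_inv_of_mul_eq_one_left ?_
    rw [complexCn, complexNc, complexCn, map_div₀, Complex.conj_ofReal, div_mul_div_comm,
      div_eq_one_iff_eq hden]
    simpa [additionDen] using
      (isComplementaryPair_ofReal J J' h z.re z.im).addition_cn_mul_conj Complex.I_sq

theorem analyticAt_complexCn (h : m + m' = 1) {z : ℂ} (hz : J.additionDen J' z ≠ 0) :
    AnalyticAt ℂ (J.complexCn J') z :=
  Complex.analyticAt_iff_eventually_differentiableAt.2 <|
    ((continuous_additionDen J J').continuousAt.eventually_ne hz).mono fun _ hw =>
      (hasDerivAt_complexCn h hw).differentiableAt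

theorem eventually_additionDen_I_mul_conj_ne_zero {z : ℂ}
    (hz : J'.additionDen J (Complex.I * conj z) ≠ 0) :
    ∀ᶠ w in 𝓝 z, J'.additionDen J (Complex.I * conj w) ≠ 0 :=
  ((continuous_additionDen J' J).comp
    (continuous_const.mul Complex.continuous_conj)).continuousAt.eventually_ne hz

theorem analyticAt_complexNc (h : m + m' = 1) {z : ℂ}
    (hz : J'.additionDen J (Complex.I * conj z) ≠ 0) : AnalyticAt ℂ (J.complexNc J') z :=
  Complex.analyticAt_iff_eventually_differentiableAt.2 <|
    (eventually_additionDen_I_mul_conj_ne_zero hz).mono fun _ hw =>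
      (hasDerivAt_complexNc h hw).differentiableAt

theorem complexCn_eventuallyEq_inv_complexNc (hm : 0 < m) (h : m + m' = 1) {z : ℂ}
    (hz : J'.additionDen J (Complex.I * conj z) ≠ 0) :
    J.complexCn J' =ᶠ[𝓝 z] (J.complexNc J')⁻¹ :=
  (eventually_additionDen_I_mul_conj_ne_zero hz).mono fun _ hw => complexCn_eq_inv_complexNc hm h hw

theorem meromorphicAt_complexCn (hm : 0 < m) (h : m + m' = 1) (z : ℂ) :
    MeromorphicAt (J.complexCn J') z := by
  by_cases hz : J.additionDen J' z = 0
  · have hz' : J'.additionDen J (Complex.I * conj z) ≠ 0 := by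
      simp [additionDen_I_mul_conj_of_additionDen_eq_zero hm hz]
    exact (analyticAt_complexNc h hz').meromorphicAt.inv.congr
      ((complexCn_eventuallyEq_inv_complexNc hm h hz').symm.filter_mono nhdsWithin_le_nhds)
  · exact (analyticAt_complexCn h hz).meromorphicAt

theorem hasDerivAt_complexNc_of_additionDen_eq_zero (hm : 0 < m) (h : m + m' = 1) {z : ℂ}
    (hz : J.additionDen J' z = 0) :
    HasDerivAt (J.complexNc J')
      (Complex.I * (J.cn z.re * J'.sn z.im * J'.dn z.im : ℝ)) z := by
  have hone := additionDen_I_mul_conj_of_additionDen_eq_zero hm hz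
  obtain ⟨hc, hS⟩ := (additionDen_eq_zero_iff hm).1 hz
  have hD : (J.dn z.re : ℂ) ^ 2 = 1 := by
    simpa [hS] using congrArg Complex.ofReal (J.dn_sq_add_mul_sn_sq z.re)
  refine (hasDerivAt_complexNc h (by simp [hone])).congr_deriv ?_
  simp only [complexSn, complexDn, hone]
  simp only [Complex.mul_re, Complex.mul_im, Complex.I_re, Complex.I_im, Complex.conj_re,
    Complex.conj_im, zero_mul, one_mul, mul_neg, sub_neg_eq_add, zero_add, neg_zero, hc, hS]
  simp only [Complex.ofReal_zero, Complex.ofReal_one, Complex.ofReal_mul, map_mul, map_div₀,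
    map_add, map_sub, map_one, map_zero, Complex.conj_ofReal, Complex.conj_I]
  linear_combination (Complex.I * J.cn z.re * J'.sn z.im * J'.dn z.im) * hD

theorem cn_mul_sn_mul_dn_ne_zero_of_additionDen_eq_zero (hm : 0 < m) (h : m + m' = 1) {z : ℂ}
    (hz : J.additionDen J' z = 0) : J.cn z.re * J'.sn z.im * J'.dn z.im ≠ 0 := by
  obtain ⟨hc, hS⟩ := (additionDen_eq_zero_iff hm).1 hz
  have hC : J.cn z.re ^ 2 = 1 := by simpa [hS] using J.sn_sq_add_cn_sq z.re
  have hs : J'.sn z.im ^ 2 = 1 := by simpa [hc] using J'.sn_sq_add_cn_sq z.im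
  have hd : J'.dn z.im ^ 2 = m := by
    linear_combination J'.dn_sq_add_mul_sn_sq z.im - m' * hs - h
  refine (pow_ne_zero_iff two_ne_zero).1 ?_
  simp [mul_pow, hC, hs, hd, hm.ne']

theorem tendsto_sub_mul_complexCn (hm : 0 < m) (h : m + m' = 1) {z : ℂ}
    (hz : J.additionDen J' z = 0) :
    Tendsto (fun w => (w - z) * J.complexCn J' w) (𝓝[≠] z)
      (𝓝 (Complex.I * (J.cn z.re * J'.sn z.im * J'.dn z.im : ℝ))⁻¹) := by
  have hden : J'.additionDen J (Complex.I * conj z) ≠ 0 := by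
    simp [additionDen_I_mul_conj_of_additionDen_eq_zero hm hz]
  refine (tendsto_sub_mul_inv_of_hasDerivAt (hasDerivAt_complexNc_of_additionDen_eq_zero hm h hz)
    (complexNc_eq_zero_of_additionDen_eq_zero hm hz) (mul_ne_zero Complex.I_ne_zero
      (mod_cast cn_mul_sn_mul_dn_ne_zero_of_additionDen_eq_zero hm h hz))).congr' ?_
  filter_upwards [(complexCn_eventuallyEq_inv_complexNc hm h hden).filter_mono
    nhdsWithin_le_nhds] with w hw
  rw [hw, Pi.inv_apply]

theorem additionDen_ne_zero_of_analyticAt (hm : 0 < m) (h : m + m' = 1) {z : ℂ}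
    (hcn : AnalyticAt ℂ (J.complexCn J') z) : J.additionDen J' z ≠ 0 := by
  intro hz
  have hzero : Tendsto (fun w => (w - z) * J.complexCn J' w) (𝓝[≠] z) (𝓝 0) := by
    have hcont : ContinuousAt (fun w => (w - z) * J.complexCn J' w) z :=
      (continuousAt_id.sub continuousAt_const).mul hcn.continuousAt
    simpa [ContinuousAt] using hcont.tendsto.mono_left nhdsWithin_le_nhds
  refine inv_ne_zero (mul_ne_zero Complex.I_ne_zero ?_)
    (tendsto_nhds_unique (tendsto_sub_mul_complexCn hm h hz) hzero)
  exact mod_cast cn_mul_sn_mul_dn_ne_zero_of_additionDen_eq_zero hm h hz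

theorem deriv_complexCn_sq (hm : 0 < m) (h : m + m' = 1) {z : ℂ}
    (hcn : AnalyticAt ℂ (J.complexCn J') z) :
    deriv (J.complexCn J') z ^ 2
      = (1 - J.complexCn J' z ^ 2) * (m' + m * J.complexCn J' z ^ 2) := by
  have hz := additionDen_ne_zero_of_analyticAt hm h hcn
  have hsn : J.complexSn J' z ^ 2 = 1 - J.complexCn J' z ^ 2 :=
    eq_sub_of_add_eq (complexSn_sq_add_complexCn_sq h hz)
  have hm' : (m' : ℂ) = 1 - m := mod_cast eq_sub_of_add_eq' h
  have hdn : J.complexDn J' z ^ 2 = m' + m * J.complexCn J' z ^ 2 := by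
    linear_combination complexDn_sq_add_mul_complexSn_sq h hz - m * hsn - hm'
  rw [(hasDerivAt_complexCn h hz).deriv, neg_sq, mul_pow, hsn, hdn]

end ComplexArgument

end JacobiFunctions

section PendulumVelocity

theorem eventually_circleIntegral_eq_of_pendulum_ode {y u : ℂ → ℂ} {p c : ℂ}
    (hy : MeromorphicAt y p)
    (hres : Tendsto (fun z => (z - p) * y z) (𝓝[≠] p) (𝓝 (-2 * Complex.I)))
    (hode : ∀ z, AnalyticAt ℂ y z → deriv y z ^ 2 = 1 - (c + y z ^ 2 / 2) ^ 2)
    (hu : AnalyticAt ℂ u p) (δ : ℂ) :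
    ∀ᶠ ρ in 𝓝[>] (0 : ℝ), (∮ z in C(p, ρ), y z * (u z - δ * y z)) = 4 * π * u p := by
  obtain ⟨g, hg, hgp, hyg⟩ := exists_analyticAt_eq_inv_smul_of_tendsto hy hres
  have hg' : deriv g p = 0 := by
    refine deriv_eq_zero_of_quartic_ode (a₄ := -1 / 4) (a₂ := -c) (a₁ := 0) (a₀ := 1 - c ^ 2)
      hg (by simp [hgp]) (by norm_num) hyg ?_
    filter_upwards [hy.eventually_analyticAt] with z hz
    linear_combination hode z hz
  filter_upwards [eventually_circleIntegral_mul_sub_mul_eq hg hg' hu hyg δ] with ρ hρ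
  rw [hρ, hgp]
  linear_combination -4 * π * u p * Complex.I_sq

theorem cos_ne_zero_of_im_ne_zero {z : ℂ} (hz : z.im ≠ 0) : Complex.cos z ≠ 0 := by
  rw [Complex.cos_ne_zero_iff]
  rintro n rfl
  exact hz (by simp)

theorem cos_add_mul_I_eq_cosh_mul_cos_sub (θ a : ℂ) : Complex.cos (θ + a * Complex.I)
    = Complex.cosh a * Complex.cos θ - Complex.I * Complex.sinh a * Complex.sin θ := by
  rw [Complex.cos_add_mul_I]
  ring

theorem cosh_mul_cos_sub_I_mul_sinh_mul_sin_ne_zero {a : ℝ} (ha : a ≠ 0) (θ : ℝ) :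
    Complex.cosh a * Complex.cos θ - Complex.I * Complex.sinh a * Complex.sin θ ≠ 0 := by
  rw [← cos_add_mul_I_eq_cosh_mul_cos_sub]
  exact cos_ne_zero_of_im_ne_zero (by simpa using ha)

variable {k m' : ℝ} (J : JacobiFunctions (k ^ 2)) (J' : JacobiFunctions m')

/-- The pendulum velocity `x₂ = 2 k cn` at complex time. -/
noncomputable def complexVelocity (z : ℂ) : ℂ :=
  2 * k * J.complexCn J' z

theorem complexVelocity_ofReal (t : ℝ) : complexVelocity J J' t = (2 * k * J.cn t : ℝ) := by
  simp [complexVelocity, JacobiFunctions.complexCn_ofReal]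

variable {J J'}

theorem meromorphicAt_complexVelocity (hk : k ≠ 0) (h : k ^ 2 + m' = 1) (z : ℂ) :
    MeromorphicAt (complexVelocity J J') z :=
  (analyticAt_const (v := 2 * (k : ℂ))).meromorphicAt.mul
    (JacobiFunctions.meromorphicAt_complexCn (sq_pos_of_ne_zero hk) h z)

theorem deriv_complexVelocity_sq (hk : k ≠ 0) (h : k ^ 2 + m' = 1) {z : ℂ}
    (hv : AnalyticAt ℂ (complexVelocity J J') z) :
    deriv (complexVelocity J J') z ^ 2
      = 1 - (1 - 2 * (k : ℂ) ^ 2 + complexVelocity J J' z ^ 2 / 2) ^ 2 := by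
  have hkc : (2 * k : ℂ) ≠ 0 := mod_cast mul_ne_zero two_ne_zero hk
  have hcn : AnalyticAt ℂ (J.complexCn J') z := by
    refine ((analyticAt_const (v := (2 * k : ℂ)⁻¹)).mul hv).congr (Eventually.of_forall fun w => ?_)
    simp only [Pi.mul_apply, complexVelocity, inv_mul_cancel_left₀ hkc]
  have hderiv : deriv (complexVelocity J J') z = 2 * k * deriv (J.complexCn J') z :=
    deriv_const_mul _ hcn.differentiableAt
  have hm' : (k : ℂ) ^ 2 + m' = 1 := mod_cast h
  have hode := JacobiFunctions.deriv_complexCn_sq (sq_pos_of_ne_zero hk) h hcn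
  push_cast at hode
  rw [hderiv, complexVelocity]
  linear_combination (4 * (k : ℂ) ^ 2) * hode
    + 4 * (k : ℂ) ^ 2 * (1 - J.complexCn J' z ^ 2) * hm'

theorem tendsto_sub_mul_complexVelocity (hk : k ≠ 0) (h : k ^ 2 + m' = 1) {K : ℝ}
    (hsn : J'.sn K = 1) (hcn : J'.cn K = 0) (hdn : J'.dn K = k) :
    Tendsto (fun w => (w - Complex.I * K) * complexVelocity J J' w) (𝓝[≠] (Complex.I * K))
      (𝓝 (-2 * Complex.I)) := by
  have hden : J.additionDen J' (Complex.I * K) = 0 := by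
    simp [JacobiFunctions.additionDen, hcn, J.sn_zero]
  have hlim : Tendsto (fun w => (w - Complex.I * K) * J.complexCn J' w) (𝓝[≠] (Complex.I * K))
      (𝓝 (Complex.I * k)⁻¹) := by
    simpa [hsn, hdn, J.cn_zero] using
      JacobiFunctions.tendsto_sub_mul_complexCn (sq_pos_of_ne_zero hk) h hden
  have hres : 2 * (k : ℂ) * (Complex.I * k)⁻¹ = -2 * Complex.I := by
    have hkc : (k : ℂ) ≠ 0 := mod_cast hk
    rw [mul_inv, Complex.inv_I]
    field_simp
  exact hres ▸ (hlim.const_mul (2 * k : ℂ)).congr fun w => mul_left_comm ..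

theorem eventually_circleIntegral_complexVelocity (hk : k ≠ 0) (h : k ^ 2 + m' = 1) {K : ℝ}
    (hsn : J'.sn K = 1) (hcn : J'.cn K = 0) (hdn : J'.dn K = k) (ω β δ θ : ℝ) :
    ∀ᶠ ρ in 𝓝[>] (0 : ℝ),
      (∮ z in C(Complex.I * K, ρ), complexVelocity J J' z *
          (β * Complex.cos (ω * z + θ) - δ * complexVelocity J J' z))
        = 4 * π * β * (Complex.cosh (ω * K : ℝ) * Complex.cos θ
          - Complex.I * Complex.sinh (ω * K : ℝ) * Complex.sin θ) := by
  have hu : AnalyticAt ℂ (fun z : ℂ => β * Complex.cos (ω * z + θ)) (Complex.I * K) := by fun_prop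
  have hcos : (ω * (Complex.I * K) + θ : ℂ) = θ + (ω * K : ℝ) * Complex.I := by
    push_cast
    ring
  rw [← cos_add_mul_I_eq_cosh_mul_cos_sub, ← hcos, mul_assoc]
  exact eventually_circleIntegral_eq_of_pendulum_ode (meromorphicAt_complexVelocity hk h _)
    (tendsto_sub_mul_complexVelocity hk h hsn hcn hdn)
    (fun _ => deriv_complexVelocity_sq hk h) hu δ

end PendulumVelocity

/-- Let `k ∈ (0,1)`, `k' = √(1−k²)`, and let `x^k` be the solution of the unperturbed
pendulum with `x^k(0) = (0, 2k)`. There is a meromorphic function `y` on a domain of `ℂ`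
containing `ℝ` and `iK(k')` agreeing with `x^k₂` on `ℝ`, satisfying
`(y')² = 1 − (1 − 2k² + y²/2)²` wherever it is analytic, having a simple pole at `iK(k')`
with residue `−2i`, and whose contour integral over small circles around `iK(k')` satisfies
`∮ y(t)(β cos(ωt+θ) − δ y(t)) dt = 4πβ(cosh(ωK(k')) cos θ − i sinh(ωK(k')) sin θ)`;
in particular this integral is nonzero for every `θ` whenever `β > 0`. -/
theorem stmt_17 (k : ℝ) (hk : k ∈ Set.Ioo (0 : ℝ) 1)
    (x : ℝ → ℝ × ℝ) (hx0 : x 0 = (0, 2 * k))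
    (hx1 : ∀ t : ℝ, HasDerivAt (fun s => (x s).1) ((x t).2) t)
    (hx2 : ∀ t : ℝ, HasDerivAt (fun s => (x s).2) (-Real.sin ((x t).1)) t) :
    ∃ (U : Set ℂ) (y : ℂ → ℂ),
      IsOpen U ∧ IsConnected U ∧
      (∀ t : ℝ, (t : ℂ) ∈ U) ∧
      (Complex.I * (Kell (Real.sqrt (1 - k ^ 2)) : ℂ)) ∈ U ∧
      MeromorphicOn y U ∧
      (∀ t : ℝ, y (t : ℂ) = ((x t).2 : ℂ)) ∧
      (∀ z ∈ U, AnalyticAt ℂ y z →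
        (deriv y z) ^ 2 = 1 - (1 - 2 * (k : ℂ) ^ 2 + (y z) ^ 2 / 2) ^ 2) ∧
      Tendsto (fun z : ℂ => (z - Complex.I * (Kell (Real.sqrt (1 - k ^ 2)) : ℂ)) * y z)
        (𝓝[≠] (Complex.I * (Kell (Real.sqrt (1 - k ^ 2)) : ℂ)))
        (𝓝 (-2 * Complex.I)) ∧
      (∀ ω : ℝ, 0 < ω → ∀ β δ θ : ℝ, ∃ ρ₀ > 0, ∀ ρ ∈ Set.Ioo (0 : ℝ) ρ₀,
        (∮ z in C(Complex.I * (Kell (Real.sqrt (1 - k ^ 2)) : ℂ), ρ),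
            y z * ((β : ℂ) * Complex.cos ((ω : ℂ) * z + (θ : ℂ)) - (δ : ℂ) * y z))
          = 4 * (π : ℂ) * (β : ℂ) *
            (Complex.cosh ((ω * Kell (Real.sqrt (1 - k ^ 2)) : ℝ) : ℂ) * Complex.cos (θ : ℂ)
             - Complex.I * Complex.sinh ((ω * Kell (Real.sqrt (1 - k ^ 2)) : ℝ) : ℂ)
               * Complex.sin (θ : ℂ)) ∧
        (0 < β →
          (∮ z in C(Complex.I * (Kell (Real.sqrt (1 - k ^ 2)) : ℂ), ρ),
              y z * ((β : ℂ) * Complex.cos ((ω : ℂ) * z + (θ : ℂ)) - (δ : ℂ) * y z)) ≠ 0)) := by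
  have hk0 : k ≠ 0 := hk.1.ne'
  set κ : ℝ := √(1 - k ^ 2)
  have hκ : k ^ 2 + κ ^ 2 = 1 := by
    rw [sq_sqrt (sub_nonneg.2 (pow_le_one₀ hk.1.le hk.2.le)), add_sub_cancel]
  obtain ⟨J', hsn, hcn, hdn⟩ := JacobiFunctions.exists_quarter_period (κ := κ)
    (by linarith [pow_pos hk.1 2])
  rw [← hκ, add_sub_cancel_right, sqrt_sq hk.1.le] at hdn
  have hK : Kell κ ≠ 0 := fun h => by simp [h, J'.sn_zero] at hsn
  let J := JacobiFunctions.ofPendulum hk0 x hx0 hx1 hx2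
  refine ⟨Set.univ, complexVelocity J J', isOpen_univ, isConnected_univ, fun _ => Set.mem_univ _,
    Set.mem_univ _, fun z _ => meromorphicAt_complexVelocity hk0 hκ z, fun t => ?_,
    fun z _ => deriv_complexVelocity_sq hk0 hκ,
    tendsto_sub_mul_complexVelocity hk0 hκ hsn hcn hdn, fun ω hω β δ θ => ?_⟩
  · have hx : 2 * k * J.cn t = (x t).2 := mul_div_cancel₀ _ (mul_ne_zero two_ne_zero hk0)
    rw [complexVelocity_ofReal, hx]
  · obtain ⟨ρ₀, hρ₀, hint⟩ := mem_nhdsGT_iff_exists_Ioo_subset.1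
      (eventually_circleIntegral_complexVelocity (J := J) hk0 hκ hsn hcn hdn ω β δ θ)
    refine ⟨ρ₀, hρ₀, fun ρ hρ => ⟨hint hρ, fun hβ => ?_⟩⟩
    rw [hint hρ]
    exact mul_ne_zero (by simp [pi_ne_zero, hβ.ne'])
      (cosh_mul_cos_sub_I_mul_sinh_mul_sin_ne_zero (mul_ne_zero hω.ne' hK) θ)
end
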